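/- arXiv:2509.23826 — 3 statements merged into one kernel-verified Lean document; each statement's English description precedes it below -/
import Mathlib

section
/- Let γ > −1, α > 0 and for k ≥ 0, n ≥ 0 set Δ_{k,n}(t) = (1/n!) ∫_{(α,∞)^n} (∏_i λ_i^k (λ_i−α)^γ) ∏_{i<j}(λ_i−λ_j)² e^{∑_i (α − λ_i − t/(2λ_i))} dλ / Γ(γ+1)^n. Then as t → −∞, Δ_{k,n}(t) ∼ e^{n|t|/(2α)} |t/(2α)|^{−n(n+γ)} · α^{n(n+k+γ)} ∏_{j=0}^{n−1} (j!)² binom(γ+j, j). -/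
open Filter

/-- Generalized binomial coefficient `binom(x, j) = Γ(x+1)/(Γ(j+1) Γ(x-j+1))`. -/
noncomputable def genBinom (x : ℝ) (j : ℕ) : ℝ :=
  Real.Gamma (x + 1) / (Real.Gamma ((j : ℝ) + 1) * Real.Gamma (x - (j : ℝ) + 1))

/-!
Put `s = -t/(2α) = |t/(2α)|`. Since `-t/(2λ) = αs/λ` is largest at the left end point `λ = α`, the
substitution `λ = α + (α/s) y` concentrates the integral there: it turns `αs/λ` into
`s - sy/(s+y) → s - y`, so that every moment about `α` tends, after rescaling, to a Gamma integral.
By Andréief's identity the multiple integral is `n!` times the Hankel determinant of these moments,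
hence the limit is governed by `det Γ(γ+1+i+j) = ∏ j! Γ(γ+1+j)`.

Only the limit of the factor `λ^k` at `α` and its growth at infinity matter, so the argument works
for any amplitude `f(λ)` of small enough exponential growth with a nonzero limit at `α`.
-/

open MeasureTheory Set Topology
open scoped Nat

section Determinants

variable {R : Type*} [CommRing R]

theorem prod_filter_lt_sub_sq_eq_det_vandermonde_sq {n : ℕ} (v : Fin n → R) :
    ∏ p : Fin n × Fin n with p.1 < p.2, (v p.1 - v p.2) ^ 2 = (Matrix.vandermonde v).det ^ 2 := by
  rw [Matrix.det_vandermonde, ← Finset.prod_pow, Finset.prod_filter, ← Finset.univ_product_univ,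
    Finset.prod_product]
  refine Finset.prod_congr rfl fun i _ => ?_
  rw [← Finset.prod_pow, ← Finset.prod_filter, Finset.filter_lt_eq_Ioi]
  exact Finset.prod_congr rfl fun j _ => sub_sq_comm _ _

theorem det_of_mul_pow_add_mul {n : ℕ} (a c : R) (M : Matrix (Fin n) (Fin n) R) :
    (Matrix.of fun i j : Fin n => a * c ^ (i + j : ℕ) * M i j).det =
      a ^ n * c ^ (n * (n - 1)) * M.det := by
  have factor : (Matrix.of fun i j : Fin n => a * c ^ (i + j : ℕ) * M i j) =
      a • Matrix.of fun i j : Fin n =>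
        c ^ (i : ℕ) * Matrix.of (fun i j : Fin n => c ^ (j : ℕ) * M i j) i j := by
    ext i j
    simp only [Matrix.of_apply, Matrix.smul_apply, smul_eq_mul]
    ring
  rw [factor, Matrix.det_smul, Fintype.card_fin, Matrix.det_mul_column, Matrix.det_mul_row,
    Finset.prod_pow_eq_pow_sum, ← Finset.sum_range (fun i => i), ← Finset.sum_range_id_mul_two,
    mul_two, pow_add]
  ring

theorem det_vandermonde_natCast_add (n : ℕ) (a : R) :
    (Matrix.vandermonde fun i : Fin n => (i : R) + a).det = ∏ j ∈ Finset.range n, (j ! : R) := by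
  rw [Matrix.det_vandermonde_add]
  cases n with
  | zero => simp
  | succ n =>
    rw [Matrix.det_vandermonde_id_eq_superFactorial, ← Nat.prod_range_factorial_succ,
      Finset.prod_range_succ', Nat.factorial_zero, Nat.cast_one, mul_one, Nat.cast_prod]

theorem Gamma_add_natCast_eq_mul_ascPochhammer {x : ℝ} (hx : ∀ m : ℕ, x ≠ -m) (j : ℕ) :
    Real.Gamma (x + j) = Real.Gamma x * (ascPochhammer ℝ j).eval x := by
  induction j with
  | zero => simp
  | succ j ih =>
    rw [Nat.cast_succ, ← add_assoc, Real.Gamma_add_one fun h => hx j (eq_neg_of_add_eq_zero_left h),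
      ih, ascPochhammer_succ_eval]
    ring

theorem det_of_Gamma_add_add {x : ℝ} (hx : ∀ m : ℕ, x ≠ -m) (n : ℕ) :
    (Matrix.of fun i j : Fin n => Real.Gamma (x + (i + j : ℕ))).det =
      ∏ j ∈ Finset.range n, (j ! * Real.Gamma (x + j)) := by
  have row (i j : Fin n) : Real.Gamma (x + (i + j : ℕ)) =
      Real.Gamma (x + (i : ℕ)) * (ascPochhammer ℝ j).eval ((i : ℝ) + x) := by
    rw [Nat.cast_add, ← add_assoc, add_comm (i : ℝ) x]
    refine Gamma_add_natCast_eq_mul_ascPochhammer (fun m h => hx (i + m) ?_) j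
    push_cast
    linarith
  have monic_rows := Matrix.det_eval_matrixOfPolynomials_eq_det_vandermonde
    (fun i : Fin n => (i : ℝ) + x) (fun j => ascPochhammer ℝ j)
    (fun _ => ascPochhammer_natDegree _ _) (fun _ => monic_ascPochhammer _ _)
  simp only [row]
  rw [Finset.prod_mul_distrib, ← det_vandermonde_natCast_add n x, monic_rows,
    Finset.prod_range fun j => Real.Gamma (x + j), mul_comm]
  exact Matrix.det_mul_column _ _

end Determinants

section Andreief

variable {X 𝕜 : Type*} [MeasurableSpace X] [RCLike 𝕜] {μ : Measure X} [SigmaFinite μ]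

theorem integral_det_mul_det {ι : Type*} [Fintype ι] [DecidableEq ι] {f g : ι → X → 𝕜}
    (hfg : ∀ i j, Integrable (fun x => f i x * g j x) μ) :
    ∫ x : ι → X, (Matrix.of fun i j => f i (x j)).det * (Matrix.of fun i j => g i (x j)).det
        ∂(Measure.pi fun _ => μ) =
      (Fintype.card ι)! * (Matrix.of fun i j => ∫ x, f i x * g j x ∂μ).det := by
  set M := Matrix.of fun i j => ∫ x, f i x * g j x ∂μ with hM
  let sgn (σ : Equiv.Perm ι) : 𝕜 := (Equiv.Perm.sign σ : ℤ)
  have expand (x : ι → X) :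
      (Matrix.of fun i j => f i (x j)).det * (Matrix.of fun i j => g i (x j)).det =
        ∑ σ, ∑ τ, sgn σ * sgn τ * ∏ i, f (σ i) (x i) * g (τ i) (x i) := by
    simp only [Matrix.det_apply', Finset.sum_mul_sum, Matrix.of_apply, Finset.prod_mul_distrib]
    exact Finset.sum_congr rfl fun σ _ => Finset.sum_congr rfl fun τ _ => mul_mul_mul_comm _ _ _ _
  have integrable (σ τ : Equiv.Perm ι) : Integrable
      (fun x : ι → X => sgn σ * sgn τ * ∏ i, f (σ i) (x i) * g (τ i) (x i))
      (Measure.pi fun _ => μ) :=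
    (Integrable.fintype_prod (f := fun i y => f (σ i) y * g (τ i) y)
      fun i => hfg (σ i) (τ i)).const_mul _
  have sum_right (σ : Equiv.Perm ι) : ∑ τ, sgn σ * sgn τ * ∏ i, M (σ i) (τ i) = M.det := by
    have sgn_sq : sgn σ * sgn σ = 1 := by
      rcases Int.units_eq_one_or (Equiv.Perm.sign σ) with h | h <;> simp [sgn, h]
    calc ∑ τ, sgn σ * sgn τ * ∏ i, M (σ i) (τ i)
        = sgn σ * (M.submatrix σ id).det := by
          rw [← Matrix.det_transpose, Matrix.det_apply', Finset.mul_sum]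
          exact Finset.sum_congr rfl fun τ _ => mul_assoc _ _ _
      _ = M.det := by rw [Matrix.det_permute, ← mul_assoc, sgn_sq, one_mul]
  have integral_term (σ τ : Equiv.Perm ι) :
      ∫ x : ι → X, sgn σ * sgn τ * ∏ i, f (σ i) (x i) * g (τ i) (x i) ∂(Measure.pi fun _ => μ) =
        sgn σ * sgn τ * ∏ i, M (σ i) (τ i) := by
    rw [integral_const_mul, integral_fintype_prod_eq_prod fun i y => f (σ i) y * g (τ i) y]
    simp only [hM, Matrix.of_apply]
  simp only [expand]
  rw [integral_finsetSum _ fun σ _ => integrable_finsetSum _ fun τ _ => integrable σ τ]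
  simp only [integral_finsetSum _ fun τ _ => integrable _ τ, integral_term, sum_right,
    Finset.sum_const, Finset.card_univ, Fintype.card_perm, nsmul_eq_mul]

theorem integral_prod_mul_prod_sub_sq (n : ℕ) {v w : X → 𝕜}
    (hvw : ∀ m : ℕ, Integrable (fun x => v x ^ m * w x) μ) :
    ∫ x : Fin n → X, (∏ i, w (x i)) *
        ∏ p : Fin n × Fin n with p.1 < p.2, (v (x p.1) - v (x p.2)) ^ 2 ∂(Measure.pi fun _ => μ) =
      n ! * (Matrix.of fun i j : Fin n => ∫ x, v x ^ (i + j : ℕ) * w x ∂μ).det := by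
  have andreief := integral_det_mul_det (μ := μ) (f := fun (i : Fin n) x => v x ^ (i : ℕ))
    (g := fun i x => v x ^ (i : ℕ) * w x) fun i j => by
      simpa only [← mul_assoc, ← pow_add] using hvw (i + j)
  simp only [← mul_assoc, ← pow_add, Fintype.card_fin] at andreief
  rw [← andreief]
  refine integral_congr_ae (.of_forall fun x => ?_)
  have det_weighted : (Matrix.of fun i j : Fin n => v (x j) ^ (i : ℕ) * w (x j)).det =
      (∏ i, w (x i)) * (Matrix.vandermonde fun i => v (x i)).det := by
    rw [← Matrix.det_transpose (Matrix.vandermonde _), ← Matrix.det_mul_row]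
    simp only [Matrix.transpose_apply, Matrix.vandermonde_apply, mul_comm]
  have det_powers : (Matrix.of fun i j : Fin n => v (x j) ^ (i : ℕ)).det =
      (Matrix.vandermonde fun i => v (x i)).det :=
    Matrix.det_transpose (Matrix.vandermonde fun i => v (x i))
  beta_reduce
  rw [det_weighted, det_powers, prod_filter_lt_sub_sq_eq_det_vandermonde_sq fun i => v (x i)]
  ring

end Andreief

section AffineSubstitution

variable {E : Type*} [NormedAddCommGroup E] (f : ℝ → E) (a : ℝ) {c : ℝ}

theorem integrableOn_Ioi_comp_add_mul_iff (hc : 0 < c) :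
    IntegrableOn (fun y => f (a + c * y)) (Ioi 0) ↔ IntegrableOn f (Ioi a) := by
  rw [integrableOn_Ioi_comp_mul_left_iff (fun x => f (a + x)) 0 hc, mul_zero]
  simpa [Function.comp_def] using
    (measurePreserving_add_left volume a).integrableOn_comp_preimage
      (MeasurableEquiv.addLeft a).measurableEmbedding (f := f) (s := Ioi a)

theorem integral_Ioi_comp_add_mul [NormedSpace ℝ E] (hc : 0 < c) :
    ∫ y in Ioi 0, f (a + c * y) = c⁻¹ • ∫ x in Ioi a, f x := by
  have translate := (measurePreserving_add_left volume a).setIntegral_preimage_emb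
    (MeasurableEquiv.addLeft a).measurableEmbedding f (Ioi a)
  rw [preimage_const_add_Ioi, sub_self] at translate
  rw [integral_comp_mul_left_Ioi (fun x => f (a + x)) 0 hc, mul_zero, translate]

end AffineSubstitution

section EdgeWeight

/-- The weight `(x - α)^b ψ(x) e^{αs/x}` on `(α, ∞)`. The deformed Laguerre weight
`x^k (x - α)^γ e^{α - x - t/(2x)}` is the case `b = γ`, `ψ(x) = x^k e^{α - x}`, `t = -2αs`; its
`m`-th moment about `α` is the integral of the weight with `b = γ + m`. -/
noncomputable def edgeWeight (ψ : ℝ → ℝ) (α b s x : ℝ) : ℝ :=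
  (x - α) ^ b * ψ x * Real.exp (α * s / x)

/-- The weight `edgeWeight ψ α b s` in the variable `y = s (x - α) / α`, divided by its size
`e^s (α/s)^b` near `x = α`. -/
noncomputable def rescaledEdgeWeight (ψ : ℝ → ℝ) (α b s y : ℝ) : ℝ :=
  y ^ b * ψ (α + α / s * y) * Real.exp (-(s * y / (s + y)))

/-- A bound for `rescaledEdgeWeight ψ α b s y` uniform in `s`, valid when `|ψ(x)| ≤ C e^{-cx}`; it
serves as the dominating function as `s → ∞`. -/
noncomputable def edgeMajorant (α b c C y : ℝ) : ℝ :=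
  C * (y ^ b * Real.exp (-(2 * √(c * α)) * y ^ (1 / 2 : ℝ)))

theorem pow_mul_edgeWeight {α x : ℝ} (hx : α < x) (ψ : ℝ → ℝ) (b s : ℝ) (m : ℕ) :
    (x - α) ^ m * edgeWeight ψ α b s x = edgeWeight ψ α (b + m) s x := by
  rw [edgeWeight, edgeWeight, Real.rpow_add (sub_pos.2 hx), Real.rpow_natCast]
  ring

variable {ψ : ℝ → ℝ} {α b c s C L y : ℝ}

theorem edgeWeight_add_mul (hα : 0 < α) (hs : 0 < s) (hy : 0 < y) :
    edgeWeight ψ α b s (α + α / s * y) =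
      Real.exp s * (α / s) ^ b * rescaledEdgeWeight ψ α b s y := by
  have phase : α * s / (α + α / s * y) = s + -(s * y / (s + y)) := by
    field_simp
    ring
  rw [edgeWeight, rescaledEdgeWeight, phase, Real.exp_add, add_sub_cancel_left,
    Real.mul_rpow (by positivity) hy.le]
  ring

-- AM-GM: the product `cαy` of the two terms on the right does not depend on `s`.
theorem two_mul_sqrt_mul_sqrt_le_add_div (hα : 0 < α) (hc : 0 < c) (hs : 0 < s) (hy : 0 < y) :
    2 * √(c * α) * √y ≤ c * (α + α / s * y) + s * y / (s + y) := by
  set u := c * (α + α / s * y)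
  set w := s * y / (s + y)
  have hu : 0 ≤ u := by positivity
  have hw : 0 ≤ w := by positivity
  have huw : u * w = c * α * y := by
    simp only [u, w]
    field_simp
  rw [mul_assoc, ← Real.sqrt_mul (by positivity), ← huw, Real.sqrt_mul hu]
  nlinarith [two_mul_le_add_sq (√u) (√w), Real.sq_sqrt hu, Real.sq_sqrt hw]

theorem abs_rescaledEdgeWeight_le_edgeMajorant (hα : 0 < α) (hc : 0 < c)
    (hψC : ∀ x > α, |ψ x| ≤ C * Real.exp (-c * x)) (hs : 0 < s) (hy : 0 < y) :
    |rescaledEdgeWeight ψ α b s y| ≤ edgeMajorant α b c C y := by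
  have hx : α < α + α / s * y := lt_add_of_pos_right _ (by positivity)
  have hC : 0 ≤ C := nonneg_of_mul_nonneg_left ((abs_nonneg _).trans (hψC _ hx)) (Real.exp_pos _)
  calc |rescaledEdgeWeight ψ α b s y|
      = y ^ b * |ψ (α + α / s * y)| * Real.exp (-(s * y / (s + y))) := by
        rw [rescaledEdgeWeight, abs_mul, abs_mul, Real.abs_exp,
          abs_of_pos (Real.rpow_pos_of_pos hy b)]
    _ ≤ y ^ b * (C * Real.exp (-c * (α + α / s * y))) * Real.exp (-(s * y / (s + y))) := by
        gcongr
        exact hψC _ hx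
    _ = C * (y ^ b * Real.exp (-(c * (α + α / s * y) + s * y / (s + y)))) := by
        rw [neg_add, Real.exp_add, neg_mul]
        ring
    _ ≤ edgeMajorant α b c C y := by
        rw [edgeMajorant, ← Real.sqrt_eq_rpow, neg_mul]
        gcongr
        exact two_mul_sqrt_mul_sqrt_le_add_div hα hc hs hy

theorem integrableOn_edgeMajorant (hα : 0 < α) (hc : 0 < c) (hb : -1 < b) (C : ℝ) :
    IntegrableOn (edgeMajorant α b c C) (Ioi 0) :=
  (integrableOn_rpow_mul_exp_neg_mul_rpow hb one_half_pos (by positivity)).const_mul C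

theorem measurable_rescaledEdgeWeight (hψ : Measurable ψ) :
    Measurable (rescaledEdgeWeight ψ α b s) := by
  unfold rescaledEdgeWeight
  fun_prop

theorem integrableOn_edgeWeight (hα : 0 < α) (hc : 0 < c) (hb : -1 < b) (hψ : Measurable ψ)
    (hψC : ∀ x > α, |ψ x| ≤ C * Real.exp (-c * x)) (hs : 0 < s) :
    IntegrableOn (edgeWeight ψ α b s) (Ioi α) := by
  have rescaled : IntegrableOn (rescaledEdgeWeight ψ α b s) (Ioi 0) :=
    Integrable.mono' (integrableOn_edgeMajorant hα hc hb C)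
      (measurable_rescaledEdgeWeight hψ).aestronglyMeasurable
      ((ae_restrict_mem measurableSet_Ioi).mono fun y hy =>
        abs_rescaledEdgeWeight_le_edgeMajorant hα hc hψC hs hy)
  rw [← integrableOn_Ioi_comp_add_mul_iff _ α (div_pos hα hs)]
  exact IntegrableOn.congr_fun (rescaled.const_mul (Real.exp s * (α / s) ^ b))
    (fun y hy => (edgeWeight_add_mul hα hs hy).symm) measurableSet_Ioi

theorem mul_integral_edgeWeight (hα : 0 < α) (hs : 0 < s) :
    Real.exp (-s) * (s / α) ^ (b + 1) * ∫ x in Ioi α, edgeWeight ψ α b s x =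
      ∫ y in Ioi 0, rescaledEdgeWeight ψ α b s y := by
  have substitution := integral_Ioi_comp_add_mul (edgeWeight ψ α b s) α (div_pos hα hs)
  rw [setIntegral_congr_fun measurableSet_Ioi fun y hy => edgeWeight_add_mul hα hs hy,
    integral_const_mul, inv_div, smul_eq_mul] at substitution
  have cancel : (s / α) ^ b * (α / s) ^ b = 1 := by
    rw [← inv_div, Real.inv_rpow (by positivity), inv_mul_cancel₀ (by positivity)]
  rw [Real.rpow_add_one (by positivity), Real.exp_neg]
  calc (Real.exp s)⁻¹ * ((s / α) ^ b * (s / α)) * ∫ x in Ioi α, edgeWeight ψ α b s x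
      = (Real.exp s)⁻¹ * (s / α) ^ b * ((s / α) * ∫ x in Ioi α, edgeWeight ψ α b s x) := by ring
    _ = (Real.exp s)⁻¹ * Real.exp s * ((s / α) ^ b * (α / s) ^ b) *
          ∫ y in Ioi 0, rescaledEdgeWeight ψ α b s y := by rw [← substitution]; ring
    _ = ∫ y in Ioi 0, rescaledEdgeWeight ψ α b s y := by
      rw [cancel, inv_mul_cancel₀ (Real.exp_pos s).ne', one_mul, one_mul]

theorem tendsto_rescaledEdgeWeight (hα : 0 < α) (hψL : Tendsto ψ (𝓝[>] α) (𝓝 L)) (hy : 0 < y) :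
    Tendsto (fun s => rescaledEdgeWeight ψ α b s y) atTop
      (𝓝 (L * (Real.exp (-y) * y ^ (b + 1 - 1)))) := by
  have amplitude : Tendsto (fun s => ψ (α + α / s * y)) atTop (𝓝 L) := by
    refine hψL.comp (tendsto_nhdsWithin_iff.2 ⟨?_, ?_⟩)
    · simpa using ((tendsto_id.const_div_atTop α).mul_const y).const_add α
    · filter_upwards [eventually_gt_atTop 0] with s hs
      exact lt_add_of_pos_right α (mul_pos (div_pos hα hs) hy)
  have phase : Tendsto (fun s => s * y / (s + y)) atTop (𝓝 y) := by
    have : Tendsto (fun s : ℝ => y / (1 + y / s)) atTop (𝓝 (y / (1 + 0))) :=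
      tendsto_const_nhds.div ((tendsto_id.const_div_atTop y).const_add 1) (by norm_num)
    rw [add_zero, div_one] at this
    refine this.congr' ?_
    filter_upwards [eventually_gt_atTop 0] with s hs
    field_simp
  rw [add_sub_cancel_right, mul_comm (Real.exp _), ← mul_assoc, mul_comm L]
  exact (amplitude.const_mul (y ^ b)).mul ((Real.continuous_exp.tendsto _).comp phase.neg)

theorem tendsto_mul_integral_edgeWeight (hα : 0 < α) (hc : 0 < c) (hb : -1 < b) (hψ : Measurable ψ)
    (hψC : ∀ x > α, |ψ x| ≤ C * Real.exp (-c * x)) (hψL : Tendsto ψ (𝓝[>] α) (𝓝 L)) :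
    Tendsto (fun s => Real.exp (-s) * (s / α) ^ (b + 1) * ∫ x in Ioi α, edgeWeight ψ α b s x) atTop
      (𝓝 (L * Real.Gamma (b + 1))) := by
  rw [Real.Gamma_eq_integral (by linarith), ← integral_const_mul]
  have rescaled : Tendsto (fun s => ∫ y in Ioi 0, rescaledEdgeWeight ψ α b s y) atTop
      (𝓝 (∫ y in Ioi 0, L * (Real.exp (-y) * y ^ (b + 1 - 1)))) := by
    refine tendsto_integral_filter_of_dominated_convergence _
      (.of_forall fun s => (measurable_rescaledEdgeWeight hψ).aestronglyMeasurable) ?_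
      (integrableOn_edgeMajorant hα hc hb C) ?_
    · filter_upwards [eventually_gt_atTop 0] with s hs
      exact (ae_restrict_mem measurableSet_Ioi).mono fun y hy =>
        abs_rescaledEdgeWeight_le_edgeMajorant hα hc hψC hs hy
    · exact (ae_restrict_mem measurableSet_Ioi).mono fun y hy =>
        tendsto_rescaledEdgeWeight hα hψL hy
  exact rescaled.congr' <| (eventually_gt_atTop 0).mono fun s hs =>
    (mul_integral_edgeWeight hα hs).symm

end EdgeWeight

section HankelDeterminant

variable {ψ : ℝ → ℝ} {α γ c s C L : ℝ}

theorem integral_prod_edgeWeight_mul_prod_sub_sq (hα : 0 < α) (hc : 0 < c) (hγ : -1 < γ)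
    (hψ : Measurable ψ) (hψC : ∀ x > α, |ψ x| ≤ C * Real.exp (-c * x)) (hs : 0 < s) (n : ℕ) :
    ∫ x : Fin n → ℝ in univ.pi fun _ => Ioi α,
        (∏ i, edgeWeight ψ α γ s (x i)) *
          ∏ p : Fin n × Fin n with p.1 < p.2, (x p.1 - x p.2) ^ 2 =
      n ! * (Matrix.of fun i j : Fin n =>
        ∫ x in Ioi α, edgeWeight ψ α (γ + (i + j : ℕ)) s x).det := by
  have moment (m : ℕ) : EqOn (fun x => (x - α) ^ m * edgeWeight ψ α γ s x)
      (edgeWeight ψ α (γ + m) s) (Ioi α) := fun x hx => pow_mul_edgeWeight hx ψ γ s m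
  have integrable (m : ℕ) :
      IntegrableOn (fun x => (x - α) ^ m * edgeWeight ψ α γ s x) (Ioi α) := by
    refine IntegrableOn.congr_fun ?_ (moment m).symm measurableSet_Ioi
    exact integrableOn_edgeWeight hα hc (by linarith [m.cast_nonneg (α := ℝ)]) hψ hψC hs
  have heine := integral_prod_mul_prod_sub_sq n integrable
  simp only [sub_sub_sub_cancel_right, setIntegral_congr_fun measurableSet_Ioi (moment _)] at heine
  rw [volume_pi, Measure.restrict_pi_pi, heine]

theorem rpow_pow_mul_pow_eq_rpow {c : ℝ} (hc : 0 < c) (γ : ℝ) (n : ℕ) :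
    (c ^ (γ + 1)) ^ n * c ^ (n * (n - 1)) = c ^ ((n : ℝ) * (n + γ)) := by
  have cast : ((n * (n - 1) : ℕ) : ℝ) = n * (n - 1) := by
    cases n <;> simp
  rw [← Real.rpow_natCast c, ← Real.rpow_mul_natCast hc.le, ← Real.rpow_add hc, cast]
  congr 1
  ring

theorem tendsto_det_integral_edgeWeight (hα : 0 < α) (hc : 0 < c) (hγ : -1 < γ)
    (hψ : Measurable ψ) (hψC : ∀ x > α, |ψ x| ≤ C * Real.exp (-c * x))
    (hψL : Tendsto ψ (𝓝[>] α) (𝓝 L)) (n : ℕ) :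
    Tendsto (fun s => Real.exp (-(n * s)) * (s / α) ^ ((n : ℝ) * (n + γ)) *
        (Matrix.of fun i j : Fin n =>
          ∫ x in Ioi α, edgeWeight ψ α (γ + (i + j : ℕ)) s x).det) atTop
      (𝓝 (L ^ n * ∏ j ∈ Finset.range n, (j ! * Real.Gamma (γ + 1 + j)))) := by
  have not_pole (m : ℕ) : γ + 1 ≠ -m := by linarith [m.cast_nonneg (α := ℝ)]
  have limit_det : (Matrix.of fun i j : Fin n => L * Real.Gamma (γ + (i + j : ℕ) + 1)).det =
      L ^ n * ∏ j ∈ Finset.range n, (j ! * Real.Gamma (γ + 1 + j)) := by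
    have := Matrix.det_smul (Matrix.of fun i j : Fin n => Real.Gamma (γ + 1 + (i + j : ℕ))) L
    rw [Fintype.card_fin, det_of_Gamma_add_add not_pole] at this
    rw [← this]
    simp only [add_right_comm γ 1]
    rfl
  have entries : Tendsto (fun s => Matrix.of fun i j : Fin n =>
        Real.exp (-s) * (s / α) ^ (γ + (i + j : ℕ) + 1) *
          ∫ x in Ioi α, edgeWeight ψ α (γ + (i + j : ℕ)) s x) atTop
      (𝓝 (Matrix.of fun i j : Fin n => L * Real.Gamma (γ + (i + j : ℕ) + 1))) :=
    tendsto_pi_nhds.2 fun i => tendsto_pi_nhds.2 fun j =>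
      tendsto_mul_integral_edgeWeight hα hc
        (by linarith [(i + j : ℕ).cast_nonneg (α := ℝ)]) hψ hψC hψL
  rw [← limit_det]
  refine (((Continuous.matrix_det continuous_id).tendsto _).comp entries).congr' ?_
  filter_upwards [eventually_gt_atTop 0] with s hs
  have hsα : 0 < s / α := div_pos hs hα
  have pull_out := det_of_mul_pow_add_mul (Real.exp (-s) * (s / α) ^ (γ + 1)) (s / α)
    (Matrix.of fun i j : Fin n => ∫ x in Ioi α, edgeWeight ψ α (γ + (i + j : ℕ)) s x)
  rw [mul_pow, mul_assoc (_ ^ n), rpow_pow_mul_pow_eq_rpow hsα, ← Real.exp_nat_mul, mul_neg]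
    at pull_out
  rw [← pull_out]
  simp only [Function.comp_apply, id_eq, Matrix.of_apply, add_right_comm γ _ 1,
    Real.rpow_add_natCast hsα.ne', mul_assoc]

theorem prod_factorial_sq_mul_genBinom (γ : ℝ) (n : ℕ) :
    ∏ j ∈ Finset.range n, (j ! : ℝ) ^ 2 * genBinom (γ + j) j =
      (∏ j ∈ Finset.range n, (j ! * Real.Gamma (γ + 1 + j))) / Real.Gamma (γ + 1) ^ n := by
  rw [← Finset.card_range n, ← Finset.prod_const, Finset.card_range, ← Finset.prod_div_distrib]
  refine Finset.prod_congr rfl fun j _ => ?_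
  rw [genBinom, Real.Gamma_nat_eq_factorial, add_sub_cancel_right, add_right_comm]
  field_simp

theorem abs_pow_le_factorial_div_mul_exp {a x : ℝ} (ha : 0 < a) (hx : 0 ≤ x) (k : ℕ) :
    |x ^ k| ≤ k ! / a ^ k * Real.exp (a * x) := by
  have := Real.pow_div_factorial_le_exp (a * x) (mul_nonneg ha.le hx) k
  rw [mul_pow, div_le_iff₀ (by positivity)] at this
  rw [abs_of_nonneg (pow_nonneg hx k), div_mul_eq_mul_div, le_div_iff₀ (by positivity)]
  linarith

theorem rpow_mul_add_add_eq_mul {α : ℝ} (hα : 0 < α) (n k : ℕ) (γ : ℝ) :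
    α ^ ((n : ℝ) * (n + k + γ)) = α ^ ((n : ℝ) * (n + γ)) * (α ^ k) ^ n := by
  rw [← pow_mul, ← Real.rpow_natCast α (k * n), ← Real.rpow_add hα]
  congr 1
  push_cast
  ring

theorem abs_mul_exp_sub_le {f : ℝ → ℝ} (hf : ∀ x > α, |f x| ≤ C * Real.exp (c * x)) :
    ∀ x > α, |f x * Real.exp (α - x)| ≤ C * Real.exp α * Real.exp (-(1 - c) * x) := fun x hx =>
  calc |f x * Real.exp (α - x)| = |f x| * Real.exp (α - x) := by rw [abs_mul, Real.abs_exp]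
    _ ≤ C * Real.exp (c * x) * Real.exp (α - x) := by
      gcongr
      exact hf x hx
    _ = C * Real.exp α * Real.exp (-(1 - c) * x) := by
      rw [mul_assoc, mul_assoc, ← Real.exp_add, ← Real.exp_add]
      ring_nf

theorem tendsto_mul_exp_sub {f : ℝ → ℝ} (hf : Tendsto f (𝓝[>] α) (𝓝 L)) :
    Tendsto (fun x => f x * Real.exp (α - x)) (𝓝[>] α) (𝓝 L) := by
  have factor : Tendsto (fun x => Real.exp (α - x)) (𝓝 α) (𝓝 (Real.exp (α - α))) :=
    (by fun_prop : Continuous fun x => Real.exp (α - x)).tendsto α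
  simpa only [sub_self, Real.exp_zero, mul_one] using hf.mul (factor.mono_left nhdsWithin_le_nhds)

theorem prod_mul_exp_sum_eq_prod_edgeWeight {n : ℕ} (hα : 0 < α) (f : ℝ → ℝ) (γ t : ℝ)
    (x : Fin n → ℝ) :
    (∏ i, f (x i) * (x i - α) ^ γ) * Real.exp (∑ i, (α - x i - t / (2 * x i))) =
      ∏ i, edgeWeight (fun z => f z * Real.exp (α - z)) α γ (-t / (2 * α)) (x i) := by
  rw [Real.exp_sum, ← Finset.prod_mul_distrib]
  refine Finset.prod_congr rfl fun i _ => ?_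
  have phase : α * (-t / (2 * α)) / x i = -(t / (2 * x i)) := by
    field_simp
  rw [edgeWeight, phase, sub_eq_add_neg (α - x i), Real.exp_add]
  ring

end HankelDeterminant

theorem stmt16_general {γ α c C L : ℝ} {f : ℝ → ℝ} (hγ : -1 < γ) (hα : 0 < α) (hc : c < 1)
    (hf : Measurable f) (hfC : ∀ x > α, |f x| ≤ C * Real.exp (c * x))
    (hfL : Tendsto f (𝓝[>] α) (𝓝 L)) (hL : L ≠ 0) (n : ℕ) :
    Tendsto
      (fun t : ℝ => (1 / ((n ! : ℝ) * Real.Gamma (γ + 1) ^ n)) *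
          (∫ lam : Fin n → ℝ in univ.pi fun _ => Ioi α,
            (∏ i, f (lam i) * (lam i - α) ^ γ) *
              (∏ p : Fin n × Fin n with p.1 < p.2, (lam p.1 - lam p.2) ^ 2) *
              Real.exp (∑ i, (α - lam i - t / (2 * lam i)))) /
        (Real.exp (n * |t| / (2 * α)) * |t / (2 * α)| ^ (-(n : ℝ) * (n + γ)) *
          (α ^ ((n : ℝ) * (n + γ)) * L ^ n) *
          ∏ j ∈ Finset.range n, (j ! : ℝ) ^ 2 * genBinom (γ + j) j))
      atBot (𝓝 1) := by
  set P := ∏ j ∈ Finset.range n, (j ! * Real.Gamma (γ + 1 + j))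
  have Gamma_pos (j : ℕ) : 0 < Real.Gamma (γ + 1 + j) :=
    Real.Gamma_pos_of_pos (by linarith [j.cast_nonneg (α := ℝ)])
  have hΓ : Real.Gamma (γ + 1) ≠ 0 := by simpa using (Gamma_pos 0).ne'
  have hP : P ≠ 0 := Finset.prod_ne_zero_iff.2 fun j _ =>
    mul_ne_zero (by positivity) (Gamma_pos j).ne'
  have genBinom_prod : ∏ j ∈ Finset.range n, (j ! : ℝ) ^ 2 * genBinom (γ + j) j =
      P / Real.Gamma (γ + 1) ^ n := prod_factorial_sq_mul_genBinom γ n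
  have measurable : Measurable fun x => f x * Real.exp (α - x) := by fun_prop
  have bound := abs_mul_exp_sub_le hfC
  have s_tendsto : Tendsto (fun t : ℝ => -t / (2 * α)) atBot atTop :=
    tendsto_neg_atBot_atTop.atTop_div_const (by positivity)
  have det_tendsto := ((tendsto_det_integral_edgeWeight hα (sub_pos.2 hc) hγ measurable bound
    (tendsto_mul_exp_sub hfL) n).comp s_tendsto).div_const (L ^ n * P)
  rw [div_self (mul_ne_zero (pow_ne_zero n hL) hP)] at det_tendsto
  refine det_tendsto.congr' ?_
  filter_upwards [s_tendsto.eventually_gt_atTop 0] with t hs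
  have abs_eq : |t / (2 * α)| = -t / (2 * α) := by
    rw [neg_div, abs_of_neg (by simpa [neg_div] using hs)]
  have exponent_eq : n * |t| / (2 * α) = n * (-t / (2 * α)) := by
    rw [← abs_eq, abs_div, abs_of_pos (show 0 < 2 * α by positivity), mul_div_assoc]
  simp only [mul_right_comm (∏ _, f _ * _), prod_mul_exp_sum_eq_prod_edgeWeight hα]
  rw [integral_prod_edgeWeight_mul_prod_sub_sq hα (sub_pos.2 hc) hγ measurable bound hs,
    genBinom_prod, abs_eq, exponent_eq, Function.comp_apply]
  generalize -t / (2 * α) = s at hs ⊢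
  rw [Real.exp_neg, neg_mul, Real.rpow_neg hs.le, Real.div_rpow hs.le hα.le]
  have hs_pow : s ^ ((n : ℝ) * (n + γ)) ≠ 0 := (Real.rpow_pos_of_pos hs _).ne'
  have hα_pow : α ^ ((n : ℝ) * (n + γ)) ≠ 0 := (Real.rpow_pos_of_pos hα _).ne'
  field_simp

/-- Asymptotics as `t → -∞` of the Hankel determinants of the deformed Laguerre weight:
with `Δ_{k,n}(t)` given by the multiple integral over `(α,∞)^n`, one has
`Δ_{k,n}(t) ∼ e^{n|t|/(2α)} |t/(2α)|^{-n(n+γ)} α^{n(n+k+γ)} ∏_{j=0}^{n-1} (j!)² binom(γ+j, j)`. -/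
theorem stmt16 (γ α : ℝ) (hγ : -1 < γ) (hα : 0 < α) (k n : ℕ)
    (Δ : ℝ → ℝ)
    (hΔ : ∀ t : ℝ, Δ t =
      (1 / ((Nat.factorial n : ℝ) * Real.Gamma (γ + 1) ^ n)) *
        ∫ lam : Fin n → ℝ in Set.univ.pi (fun _ : Fin n => Set.Ioi α),
          (∏ i, lam i ^ k * (lam i - α) ^ γ) *
            (∏ p ∈ Finset.univ.filter (fun p : Fin n × Fin n => p.1 < p.2),
              (lam p.1 - lam p.2) ^ 2) *
            Real.exp (∑ i, (α - lam i - t / (2 * lam i)))) :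
    Tendsto
      (fun t : ℝ => Δ t /
        (Real.exp ((n : ℝ) * |t| / (2 * α)) * |t / (2 * α)| ^ (-(n : ℝ) * ((n : ℝ) + γ)) *
          α ^ ((n : ℝ) * ((n : ℝ) + (k : ℝ) + γ)) *
          ∏ j ∈ Finset.range n, ((Nat.factorial j : ℝ)) ^ 2 * genBinom (γ + (j : ℝ)) j))
      atBot (nhds 1) := by
  simp only [hΔ, rpow_mul_add_add_eq_mul hα]
  exact stmt16_general hγ hα one_half_lt_one (by fun_prop)
    (fun x hx => abs_pow_le_factorial_div_mul_exp one_half_pos (hα.trans hx).le k)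
    (((continuous_pow k).tendsto α).mono_left nhdsWithin_le_nhds) (pow_ne_zero k hα.ne') n
end

section
/- Let γ > −1, α > 0 and define the multi-peakon data from the shifted Laguerre weight: e^{x_n} = ∑_{k=0}^{n−1} P_k(0)², ω_n = −(∑_{k=0}^{n−1} P_k(0)²)/(b_{n−1} P_{n−1}(0) P_n(0)), where P_k are the orthonormal polynomials and b_k = √((k+1)(k+γ+1)). Then as n → ∞: x_n = 4√(αn) + log(Γ(γ+1)/(8π α^{γ+1} e^α)) + O(n^{−1/2}) and ω_n = 1/(2√(αn)) + O(1/n). -/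
open Filter Asymptotics

/-- The Laguerre–Sonin polynomial `L_n^{(γ)}(z) = ∑_{k=0}^n binom(n+γ, n-k) (-z)^k / k!`. -/
noncomputable def lagP (γ : ℝ) (n : ℕ) (z : ℝ) : ℝ :=
  ∑ k ∈ Finset.range (n + 1),
    genBinom ((n : ℝ) + γ) (n - k) * (-z) ^ k / (Nat.factorial k : ℝ)

/-- The orthonormal polynomials for the shifted Laguerre weight:
`P_n(z) = ((-1)^n / h_n) L_n^{(γ)}(z - α)` with `h_n = binom(n+γ, n)^{1/2}`. -/
noncomputable def lagOrth (γ α : ℝ) (n : ℕ) (z : ℝ) : ℝ :=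
  ((-1 : ℝ) ^ n / Real.sqrt (genBinom ((n : ℝ) + γ) n)) * lagP γ n (z - α)

/-!
Up to a Gamma factor, `L_n^{(γ)}(-α)` is `∑ k, binom(n, k) α ^ k / Γ(k + γ + 1)`. Its `k`-th term is
a term of the power series of `cosh (2y)`, `y = √(αn)`, times a coefficient that varies slowly: by
the log-convexity of `Γ` and the expansion of `n (n - 1) ⋯ (n - k + 1) / n ^ k`, its logarithm is a
constant minus `(γ + 1/2 + α) (k/y - 1)`, up to `O((k/y - 1) ^ 2 + 1/y)`. The `cosh` weights
concentrate at `k = y` with vanishing first moment of `k/y - 1` and second moment of order `1/y`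
(relative to `cosh (2y)`), which gives Perron's asymptotics with relative error `O(n^{-1/2})`.

Hence `P_n(0) ^ 2 = A e^{4√(αn)} / √n · (1 + O(n^{-1/2}))`, and summing by comparing increments
(Stolz) gives `∑_{k<n} P_k(0) ^ 2 = A / (2√α) · e^{4√(αn)} (1 + O(n^{-1/2}))`. Since `P_{n-1}(0)`
and `P_n(0)` have opposite signs, the weights are positive and their logarithms are differences of
quantities already expanded.
-/

section

open Real Topology

section LogExp

variable {ι : Type*} {l : Filter ι} {f g : ι → ℝ}

lemma isBigO_log_of_isBigO_sub_one (hf : (fun i => f i - 1) =O[l] g) (hg : Tendsto g l (𝓝 0)) :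
    (fun i => log (f i)) =O[l] g := by
  have hf1 : Tendsto f l (𝓝 1) := by
    simpa only [sub_add_cancel, zero_add] using (hf.trans_tendsto hg).add_const 1
  have hlog := (hasDerivAt_log one_ne_zero).isBigO_sub.comp_tendsto hf1
  simp only [log_one, sub_zero] at hlog
  exact hlog.trans hf

lemma isBigO_exp_sub_one (hf : f =O[l] g) (hg : Tendsto g l (𝓝 0)) :
    (fun i => exp (f i) - 1) =O[l] g := by
  have hexp := (hasDerivAt_exp 0).isBigO_sub.comp_tendsto (hf.trans_tendsto hg)
  simp only [exp_zero, sub_zero] at hexp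
  exact hexp.trans hf

lemma abs_log_one_add_sub_le {u : ℝ} (hu : -(1 / 2) ≤ u) : |log (1 + u) - u| ≤ 2 * u ^ 2 := by
  have hpos : 0 < 1 + u := by linarith
  have hnonneg : 0 ≤ 1 + 2 * u := by linarith
  have hupper : log (1 + u) ≤ u := by linarith [log_le_sub_one_of_pos hpos]
  have hlower : u - 2 * u ^ 2 ≤ log (1 + u) := calc
    u - 2 * u ^ 2 = 1 - (1 + u)⁻¹ - u ^ 2 * (1 + 2 * u) / (1 + u) := by field_simp; ring
    _ ≤ 1 - (1 + u)⁻¹ := sub_le_self _ (by positivity)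
    _ ≤ log (1 + u) := one_sub_inv_le_log_of_pos hpos
  rw [abs_le]
  constructor <;> linarith [sq_nonneg u]

lemma abs_exp_sub_one_sub_le (x : ℝ) : |exp x - 1 - x| ≤ x ^ 2 * exp |x| := by
  have h := Complex.norm_exp_sub_sum_le_norm_mul_exp x 2
  simp only [Finset.sum_range_succ, Finset.sum_range_zero, zero_add, pow_zero, pow_one,
    Nat.factorial, Nat.cast_one, div_one, mul_one] at h
  rw [← sub_sub] at h
  rwa [Complex.norm_real, norm_eq_abs, sq_abs, ← Complex.ofReal_exp, ← Complex.ofReal_one,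
    ← Complex.ofReal_sub, ← Complex.ofReal_sub, Complex.norm_real, norm_eq_abs] at h

lemma abs_exp_sub_one_add_mul_le {φ b u K δ : ℝ} (hφ : |φ + b * u| ≤ K * δ) (hu : |u| ≤ 1)
    (huδ : u ^ 2 ≤ δ) (hδ : δ ≤ 2) (hK : 0 ≤ K) :
    |exp φ - 1 + b * u| ≤ (K + (2 * b ^ 2 + 4 * K ^ 2) * exp (|b| + 2 * K)) * δ := by
  have hδ0 : 0 ≤ δ := (sq_nonneg u).trans huδ
  have hKδ : K * δ ≤ 2 * K := by nlinarith
  have habs : |φ| ≤ |b| + 2 * K := calc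
    |φ| = |(φ + b * u) - b * u| := by rw [add_sub_cancel_right]
    _ ≤ |φ + b * u| + |b| * |u| := (abs_sub _ _).trans_eq (by rw [abs_mul])
    _ ≤ |b| + 2 * K := by nlinarith [abs_nonneg b]
  have hsq : φ ^ 2 ≤ (2 * b ^ 2 + 4 * K ^ 2) * δ := calc
    φ ^ 2 = ((φ + b * u) + -(b * u)) ^ 2 := by ring
    _ ≤ 2 * ((φ + b * u) ^ 2 + (-(b * u)) ^ 2) := add_sq_le
    _ = 2 * (|φ + b * u| ^ 2 + b ^ 2 * u ^ 2) := by rw [sq_abs]; ring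
    _ ≤ 2 * ((K * δ) * (2 * K) + b ^ 2 * δ) := by
      rw [sq |_|]
      gcongr
      exact hφ.trans hKδ
    _ = (2 * b ^ 2 + 4 * K ^ 2) * δ := by ring
  calc |exp φ - 1 + b * u| = |(exp φ - 1 - φ) + (φ + b * u)| := by ring_nf
    _ ≤ φ ^ 2 * exp |φ| + K * δ :=
      (abs_add_le _ _).trans (add_le_add (abs_exp_sub_one_sub_le φ) hφ)
    _ ≤ (2 * b ^ 2 + 4 * K ^ 2) * δ * exp (|b| + 2 * K) + K * δ := by gcongr
    _ = (K + (2 * b ^ 2 + 4 * K ^ 2) * exp (|b| + 2 * K)) * δ := by ring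

end LogExp

section GammaRatio

lemma abs_log_Gamma_add_sub_le {x s : ℝ} (hx : 0 < x) (hs₀ : 0 ≤ s) (hs₁ : s ≤ 1) :
    |log (Gamma (x + s)) - log (Gamma x) - s * log x| ≤ x⁻¹ := by
  have log_Gamma_succ {t : ℝ} (ht : 0 < t) : log (Gamma (t + 1)) = log t + log (Gamma t) := by
    rw [Gamma_add_one ht.ne', log_mul ht.ne' (Gamma_pos_of_pos ht).ne']
  have hxs : 0 < x + s := by linarith
  -- Log-convexity at `x ≤ x + s ≤ x + 1` and at `x + s ≤ x + 1 ≤ x + s + 1`.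
  have hupper := convexOn_log_Gamma.2 (Set.mem_Ioi.2 hx)
    (Set.mem_Ioi.2 (by linarith : 0 < x + 1)) (sub_nonneg.2 hs₁) hs₀ (sub_add_cancel 1 s)
  have hlower := convexOn_log_Gamma.2 (Set.mem_Ioi.2 hxs)
    (Set.mem_Ioi.2 (by linarith : 0 < x + s + 1)) hs₀ (sub_nonneg.2 hs₁) (add_sub_cancel s 1)
  simp only [smul_eq_mul, Function.comp_apply] at hupper hlower
  rw [show (1 - s) * x + s * (x + 1) = x + s by ring, log_Gamma_succ hx] at hupper
  rw [show s * (x + s) + (1 - s) * (x + s + 1) = x + 1 by ring, log_Gamma_succ hx,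
    log_Gamma_succ hxs] at hlower
  have hlog : log (x + s) ≤ log x + s * x⁻¹ := by
    rw [show x + s = x * (1 + s * x⁻¹) by field_simp, log_mul hx.ne' (by positivity)]
    linarith [log_le_sub_one_of_pos (show 0 < 1 + s * x⁻¹ by positivity)]
  have hxinv : 0 < x⁻¹ := inv_pos.2 hx
  have hsx : (1 - s) * (s * x⁻¹) ≤ x⁻¹ := by
    rw [← mul_assoc]
    exact mul_le_of_le_one_left hxinv.le (by nlinarith)
  have := mul_le_mul_of_nonneg_left hlog (sub_nonneg.2 hs₁)
  rw [abs_le]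
  constructor <;> linarith

lemma isBigO_log_add_const_sub_log (a : ℝ) :
    (fun x : ℝ => log (x + a) - log x) =O[atTop] fun x => x⁻¹ := by
  have hbdd := (tendsto_mul_log_one_add_div_atTop a).isBigO_one ℝ
  refine (hbdd.mul (isBigO_refl (fun x : ℝ => x⁻¹) atTop)).congr' ?_ (by simp)
  filter_upwards [eventually_gt_atTop 0, eventually_gt_atTop (-a)] with x hx hxa
  rw [mul_right_comm, mul_inv_cancel₀ hx.ne', one_mul, ← log_div (by linarith) hx.ne', add_div,
    div_self hx.ne']

lemma isBigO_log_Gamma_add_one_iff (a : ℝ) :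
    (fun x => log (Gamma (x + (a + 1))) - log (Gamma x) - (a + 1) * log x) =O[atTop] (·⁻¹) ↔
      (fun x => log (Gamma (x + a)) - log (Gamma x) - a * log x) =O[atTop] (·⁻¹) := by
  refine (isBigO_congr ?_ EventuallyEq.rfl).trans
    (isBigO_log_add_const_sub_log a).add_iff_left
  filter_upwards [eventually_gt_atTop (-a)] with x hx
  have hxa : 0 < x + a := by linarith
  rw [← add_assoc, Gamma_add_one hxa.ne', log_mul hxa.ne' (Gamma_pos_of_pos hxa).ne']
  ring

lemma isBigO_log_Gamma_add_sub (a : ℝ) :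
    (fun x => log (Gamma (x + a)) - log (Gamma x) - a * log x) =O[atTop] (·⁻¹) := by
  suffices h : ∀ m : ℤ, (fun x => log (Gamma (x + (Int.fract a + m))) - log (Gamma x) -
      (Int.fract a + m) * log x) =O[atTop] (·⁻¹) by
    simpa only [Int.fract_add_floor] using h ⌊a⌋
  intro m
  induction m using Int.induction_on with
  | zero =>
    refine IsBigO.of_bound 1 ?_
    filter_upwards [eventually_gt_atTop 0] with x hx
    rw [Int.cast_zero, add_zero, norm_eq_abs, norm_eq_abs, abs_of_pos (inv_pos.2 hx), one_mul]
    exact abs_log_Gamma_add_sub_le hx (Int.fract_nonneg a) (Int.fract_lt_one a).le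
  | succ i ih =>
    have h := (isBigO_log_Gamma_add_one_iff _).2 ih
    push_cast at h ⊢
    simpa only [add_assoc] using h
  | pred i ih =>
    refine (isBigO_log_Gamma_add_one_iff _).1 ?_
    push_cast at ih ⊢
    simpa only [add_assoc, sub_add_cancel] using ih

/-- The ratio `Γ(k + 1/2) / Γ(k + γ + 1)` by which the `k`-th term of the Laguerre sum differs from
a term of the `cosh` series; the half-integer comes from
`(2k)! = 4 ^ k * k! * Γ(k + 1/2) / √π`. -/
noncomputable def gammaRatio (γ : ℝ) (k : ℕ) : ℝ := Gamma (k + 1 / 2) / Gamma (k + γ + 1)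

variable {γ : ℝ}

lemma gammaRatio_pos (hγ : -1 < γ) (k : ℕ) : 0 < gammaRatio γ k := by
  have : (0 : ℝ) ≤ k := k.cast_nonneg
  exact div_pos (Gamma_pos_of_pos (by linarith)) (Gamma_pos_of_pos (by linarith))

lemma gammaRatio_succ (hγ : -1 < γ) (k : ℕ) :
    gammaRatio γ (k + 1) = gammaRatio γ k * ((k + 1 / 2) / (k + γ + 1)) := by
  have : (0 : ℝ) ≤ k := k.cast_nonneg
  simp only [gammaRatio, Nat.cast_add, Nat.cast_one]
  rw [show (k : ℝ) + 1 + 1 / 2 = (k + 1 / 2) + 1 by ring,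
    show (k : ℝ) + 1 + γ + 1 = (k + γ + 1) + 1 by ring, Gamma_add_one (by positivity),
    Gamma_add_one (by linarith), div_mul_div_comm, mul_comm, mul_comm (k + γ + 1)]

lemma gammaRatio_le (hγ : -1 < γ) (k : ℕ) :
    gammaRatio γ k ≤ max (gammaRatio γ 0) (gammaRatio γ 1) * (k + 1) := by
  set C := max (gammaRatio γ 0) (gammaRatio γ 1)
  have hC : 0 < C := lt_max_of_lt_left (gammaRatio_pos hγ 0)
  rcases k with _ | k
  · rw [Nat.cast_zero, zero_add, mul_one]
    exact le_max_left _ _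
  induction k with
  | zero =>
    push_cast
    linarith [le_max_right (gammaRatio γ 0) (gammaRatio γ 1)]
  | succ k ih =>
    have : (0 : ℝ) ≤ k := k.cast_nonneg
    rw [gammaRatio_succ hγ]
    push_cast at ih ⊢
    rw [← mul_div_assoc, div_le_iff₀ (by linarith)]
    calc gammaRatio γ (k + 1) * ((k : ℝ) + 1 + 1 / 2)
        ≤ C * (k + 1 + 1) * (k + 1 + 1 / 2) := by gcongr
      _ = C * ((k + 1 + 1) * (k + 1 + 1 / 2)) := mul_assoc _ _ _
      _ ≤ C * ((k + 1 + 1 + 1) * (k + 1 + γ + 1)) := by gcongr C * ?_; nlinarith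
      _ = C * (k + 1 + 1 + 1) * (k + 1 + γ + 1) := (mul_assoc _ _ _).symm

lemma isBigO_log_gammaRatio (hγ : -1 < γ) :
    (fun k : ℕ => log (gammaRatio γ k) + (γ + 1 / 2) * log k) =O[atTop] fun k => (k : ℝ)⁻¹ := by
  refine (((isBigO_log_Gamma_add_sub (1 / 2)).sub
    (isBigO_log_Gamma_add_sub (γ + 1))).comp_tendsto tendsto_natCast_atTop_atTop).congr_left
    fun k => ?_
  have : (0 : ℝ) ≤ k := k.cast_nonneg
  rw [gammaRatio, log_div (Gamma_pos_of_pos (by linarith)).ne'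
    (Gamma_pos_of_pos (by linarith)).ne']
  simp only [Function.comp_apply, add_assoc]
  ring

end GammaRatio

section DescFactorial

/-- The ratio `n (n - 1) ⋯ (n - k + 1) / n ^ k`, which turns the binomial coefficients of the
Laguerre sum into powers of `n`. -/
noncomputable def descFactorialRatio (n k : ℕ) : ℝ := (n.descFactorial k : ℝ) / (n : ℝ) ^ k

lemma descFactorialRatio_nonneg (n k : ℕ) : 0 ≤ descFactorialRatio n k := by
  unfold descFactorialRatio
  positivity

lemma descFactorialRatio_pos {n k : ℕ} (hn : 0 < n) (hk : k ≤ n) :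
    0 < descFactorialRatio n k :=
  div_pos (Nat.cast_pos.2 (Nat.descFactorial_pos.2 hk)) (pow_pos (Nat.cast_pos.2 hn) k)

lemma descFactorialRatio_le_one (n k : ℕ) : descFactorialRatio n k ≤ 1 :=
  div_le_one_of_le₀ (mod_cast Nat.descFactorial_le_pow n k) (by positivity)

lemma descFactorialRatio_succ {n k : ℕ} (hn : 0 < n) (hk : k ≤ n) :
    descFactorialRatio n (k + 1) = descFactorialRatio n k * (1 + -((k : ℝ) / n)) := by
  unfold descFactorialRatio
  rw [Nat.descFactorial_succ, pow_succ]
  push_cast [hk]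
  field_simp
  ring

lemma abs_log_descFactorialRatio_add_le {n k : ℕ} (hn : 0 < n) (hk : 2 * k ≤ n) :
    |log (descFactorialRatio n k) + (k : ℝ) ^ 2 / (2 * n)| ≤
      k / (2 * n) + 2 * (k : ℝ) ^ 3 / n ^ 2 := by
  have hn' : (0 : ℝ) < n := Nat.cast_pos.2 hn
  induction k with
  | zero => simp [descFactorialRatio]
  | succ k ih =>
    have hkn : (k : ℝ) / n ≤ 1 / 2 := by
      rw [div_le_iff₀ hn']
      have : 2 * ((k : ℝ) + 1) ≤ n := mod_cast hk
      linarith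
    have hfactor := abs_log_one_add_sub_le (neg_le_neg hkn)
    have hcubes : 2 * (-((k : ℝ) / n)) ^ 2 + 2 * (k : ℝ) ^ 3 / n ^ 2 ≤
        2 * ((k : ℝ) + 1) ^ 3 / n ^ 2 := by
      rw [neg_sq, div_pow, ← mul_div_assoc, ← add_div]
      gcongr
      nlinarith [sq_nonneg (k : ℝ), (k.cast_nonneg : (0 : ℝ) ≤ k)]
    rw [descFactorialRatio_succ hn (by omega),
      log_mul (descFactorialRatio_pos hn (by omega)).ne' (by linarith)]
    push_cast
    calc |log (descFactorialRatio n k) + log (1 + -((k : ℝ) / n)) + ((k : ℝ) + 1) ^ 2 / (2 * n)|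
        = |(log (descFactorialRatio n k) + (k : ℝ) ^ 2 / (2 * n)) +
            (log (1 + -((k : ℝ) / n)) - -((k : ℝ) / n)) + 1 / (2 * n)| := by
          congr 1; field_simp; ring
      _ ≤ (k / (2 * n) + 2 * (k : ℝ) ^ 3 / n ^ 2) + 2 * (-((k : ℝ) / n)) ^ 2 + 1 / (2 * n) := by
          refine (abs_add_three _ _ _).trans (add_le_add (add_le_add (ih (by omega)) hfactor) ?_)
          exact (abs_of_pos (by positivity)).le
      _ ≤ ((k : ℝ) + 1) / (2 * n) + 2 * ((k : ℝ) + 1) ^ 3 / n ^ 2 := by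
          rw [add_div (k : ℝ)]
          linarith

end DescFactorial

section CoshSeries

/-- The `k`-th term of the power series of `cosh z`; up to the factor `cosh z` these are the weights
of a probability distribution on `ℕ` concentrated near `k = z / 2`. -/
noncomputable def coshTerm (z : ℝ) (k : ℕ) : ℝ := z ^ (2 * k) / (2 * k).factorial

lemma coshTerm_nonneg (z : ℝ) (k : ℕ) : 0 ≤ coshTerm z k :=
  div_nonneg ((even_two_mul k).pow_nonneg z) (Nat.cast_nonneg _)

lemma coshTerm_mul (c z : ℝ) (k : ℕ) : coshTerm (c * z) k = (c ^ 2) ^ k * coshTerm z k := by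
  rw [coshTerm, mul_pow, pow_mul c, mul_div_assoc, coshTerm]

lemma coshTerm_succ (z : ℝ) (k : ℕ) :
    coshTerm z (k + 1) * ((2 * k + 2) * (2 * k + 1)) = z ^ 2 * coshTerm z k := by
  unfold coshTerm
  rw [show 2 * (k + 1) = 2 * k + 1 + 1 by ring, Nat.factorial_succ, Nat.factorial_succ]
  push_cast
  field_simp
  ring

lemma hasSum_coshTerm (z : ℝ) : HasSum (coshTerm z) (cosh z) := hasSum_cosh z

lemma hasSum_coshTerm_mul_two_mul (z : ℝ) :
    HasSum (fun k : ℕ => coshTerm z k * (2 * k)) (z * sinh z) := by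
  rw [← hasSum_nat_add_iff' 1, Finset.sum_range_one, Nat.cast_zero, mul_zero, mul_zero, sub_zero]
  refine ((hasSum_sinh z).mul_left z).congr_fun fun k => ?_
  unfold coshTerm
  rw [show 2 * (k + 1) = 2 * k + 1 + 1 by ring, Nat.factorial_succ]
  push_cast
  field_simp
  ring

lemma hasSum_coshTerm_mul_descPochhammer (z : ℝ) :
    HasSum (fun k : ℕ => coshTerm z k * (2 * k * (2 * k - 1))) (z ^ 2 * cosh z) := by
  rw [← hasSum_nat_add_iff' 1, Finset.sum_range_one, Nat.cast_zero, mul_zero, zero_mul, mul_zero,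
    sub_zero]
  refine ((hasSum_coshTerm z).mul_left (z ^ 2)).congr_fun fun k => ?_
  rw [← coshTerm_succ]
  push_cast
  ring

lemma hasSum_coshTerm_mul_deviation {y : ℝ} (hy : y ≠ 0) :
    HasSum (fun k : ℕ => coshTerm (2 * y) k * (k / y - 1)) (-exp (-(2 * y))) := by
  have hvalue : -exp (-(2 * y)) =
      2 * y * sinh (2 * y) * (1 / (2 * y)) - cosh (2 * y) := by
    rw [← cosh_sub_sinh]
    field_simp
    ring
  rw [hvalue]
  refine (((hasSum_coshTerm_mul_two_mul (2 * y)).mul_right (1 / (2 * y))).sub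
    (hasSum_coshTerm (2 * y))).congr_fun fun k => ?_
  field_simp

lemma hasSum_coshTerm_mul_deviation_sq {y : ℝ} (hy : y ≠ 0) :
    HasSum (fun k : ℕ => coshTerm (2 * y) k * (k / y - 1) ^ 2)
      (2 * exp (-(2 * y)) + sinh (2 * y) / (2 * y)) := by
  have hvalue : 2 * exp (-(2 * y)) + sinh (2 * y) / (2 * y) =
      1 / (2 * y) ^ 2 * ((2 * y) ^ 2 * cosh (2 * y) + 2 * y * sinh (2 * y) * (1 - 4 * y) +
        cosh (2 * y) * (2 * y) ^ 2) := by
    rw [← cosh_sub_sinh]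
    field_simp
    ring
  rw [hvalue]
  refine ((((hasSum_coshTerm_mul_descPochhammer (2 * y)).add
    ((hasSum_coshTerm_mul_two_mul (2 * y)).mul_right (1 - 4 * y))).add
    ((hasSum_coshTerm (2 * y)).mul_right ((2 * y) ^ 2))).mul_left
      (1 / (2 * y) ^ 2)).congr_fun fun k => ?_
  field_simp
  ring

lemma cosh_le_exp {x : ℝ} (hx : 0 ≤ x) : cosh x ≤ exp x := by
  rw [← cosh_add_sinh]
  exact le_add_of_nonneg_right (sinh_nonneg_iff.2 hx)

lemma sinh_le_exp (x : ℝ) : sinh x ≤ exp x := by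
  rw [← cosh_add_sinh]
  exact le_add_of_nonneg_left (cosh_pos x).le

end CoshSeries

section CoshTail

/-- A majorant of `coshTerm (2 * y)` outside `[y / 2, 2 * y]`, obtained by Chernoff's trick of
multiplying by `2 ^ (y - 2 * k) + 2 ^ (2 * k - 4 * y)`. -/
noncomputable def coshTail (y : ℝ) (k : ℕ) : ℝ :=
  2 ^ y * coshTerm y k + 2 ^ (-(4 * y)) * coshTerm (4 * y) k

lemma coshTail_nonneg (y : ℝ) (k : ℕ) : 0 ≤ coshTail y k := by
  have := coshTerm_nonneg y k
  have := coshTerm_nonneg (4 * y) k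
  unfold coshTail
  positivity

lemma coshTerm_le_coshTail {y : ℝ} {k : ℕ} (hk : (k : ℝ) < y / 2 ∨ 2 * y < k) :
    coshTerm (2 * y) k ≤ coshTail y k := by
  have hfactor : coshTail y k =
      (2 ^ (y - 2 * k) + 2 ^ (2 * k - 4 * y)) * coshTerm (2 * y) k := by
    have hpow : (2 : ℝ) ^ (2 * k : ℝ) = 4 ^ k := by
      rw [rpow_mul two_pos.le, rpow_natCast]
      norm_num
    have hhalf : coshTerm (2 * y) k = 4 ^ k * coshTerm y k := by
      rw [coshTerm_mul]
      norm_num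
    have hdouble : coshTerm (4 * y) k = 4 ^ k * coshTerm (2 * y) k := by
      rw [show 4 * y = 2 * (2 * y) by ring, coshTerm_mul]
      norm_num
    rw [coshTail, hdouble, hhalf, rpow_sub two_pos, rpow_sub two_pos, hpow, rpow_neg two_pos.le]
    field_simp
  rw [hfactor]
  refine le_mul_of_one_le_left (coshTerm_nonneg _ _) ?_
  rcases hk with hk | hk
  · exact (one_le_rpow one_le_two (by linarith)).trans
      (le_add_of_nonneg_right (rpow_nonneg two_pos.le _))
  · exact (one_le_rpow one_le_two (by linarith)).trans
      (le_add_of_nonneg_left (rpow_nonneg two_pos.le _))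

lemma hasSum_coshTail_mul_add_one (y : ℝ) :
    HasSum (fun k : ℕ => coshTail y k * (k + 1)) (2 ^ y * (cosh y + y / 2 * sinh y) +
      2 ^ (-(4 * y)) * (cosh (4 * y) + 2 * y * sinh (4 * y))) := by
  have hterm (z : ℝ) : HasSum (fun k : ℕ => coshTerm z k * (k + 1)) (cosh z + z / 2 * sinh z) := by
    rw [show z / 2 * sinh z = z * sinh z * (1 / 2) by ring]
    refine ((hasSum_coshTerm z).add
      ((hasSum_coshTerm_mul_two_mul z).mul_right (1 / 2))).congr_fun fun k => ?_
    ring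
  have h4y := hterm (4 * y)
  rw [show 4 * y / 2 = 2 * y by ring] at h4y
  refine (((hterm y).mul_left (2 ^ y)).add (h4y.mul_left (2 ^ (-(4 * y))))).congr_fun fun k => ?_
  rw [coshTail]
  ring

lemma coshTail_sum_le {y : ℝ} (hy : 0 ≤ y) :
    2 ^ y * (cosh y + y / 2 * sinh y) +
      2 ^ (-(4 * y)) * (cosh (4 * y) + 2 * y * sinh (4 * y)) ≤ (2 + 3 * y) * exp (1.7 * y) := by
  have hfirst : 2 ^ y * exp y ≤ exp (1.7 * y) := by
    rw [rpow_def_of_pos two_pos, ← exp_add, exp_le_exp]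
    nlinarith [log_two_lt_d9]
  have hsecond : 2 ^ (-(4 * y)) * exp (4 * y) ≤ exp (1.7 * y) := by
    rw [rpow_def_of_pos two_pos, ← exp_add, exp_le_exp]
    nlinarith [log_two_gt_d9]
  have h4y : 0 ≤ 4 * y := by positivity
  calc _ ≤ 2 ^ y * (exp y + y / 2 * exp y) +
        2 ^ (-(4 * y)) * (exp (4 * y) + 2 * y * exp (4 * y)) := by
        gcongr <;> first | exact cosh_le_exp ‹_› | exact sinh_le_exp _
    _ = (1 + y / 2) * (2 ^ y * exp y) + (1 + 2 * y) * (2 ^ (-(4 * y)) * exp (4 * y)) := by ring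
    _ ≤ (1 + y / 2) * exp (1.7 * y) + (1 + 2 * y) * exp (1.7 * y) := by gcongr
    _ ≤ (2 + 3 * y) * exp (1.7 * y) := by nlinarith [exp_pos (1.7 * y)]

end CoshTail

section Laplace

variable {y b C B : ℝ} {c : ℕ → ℝ}

lemma abs_sub_one_add_mul_le {a b u M : ℝ} (ha : |a| ≤ M) (hu : 1 / 2 ≤ |u|) :
    |a - 1 + b * u| ≤ M + (4 + 2 * |b|) * u ^ 2 := by
  have hu_sq : |u| ≤ 2 * u ^ 2 := by rw [← sq_abs]; nlinarith
  calc |a - 1 + b * u| ≤ |a| + |-1| + |b * u| := by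
        rw [sub_eq_add_neg]
        exact abs_add_three _ _ _
    _ = |a| + 1 + |b| * |u| := by rw [abs_neg, abs_one, abs_mul]
    _ ≤ M + 4 * u ^ 2 + |b| * (2 * u ^ 2) := by
        gcongr
        linarith
    _ = M + (4 + 2 * |b|) * u ^ 2 := by ring

lemma coshTerm_mul_abs_sub_one_add_le (hy : 0 < y) (hC : 0 ≤ C) (hB : 0 ≤ B)
    (hc : ∀ k : ℕ, y / 2 ≤ k → (k : ℝ) ≤ 2 * y →
      |c k - 1 + b * (k / y - 1)| ≤ C * ((k / y - 1) ^ 2 + y⁻¹))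
    (hcB : ∀ k : ℕ, |c k| ≤ B * (k + 1)) (k : ℕ) :
    coshTerm (2 * y) k * |c k - 1 + b * (k / y - 1)| ≤
      (C + 4 + 2 * |b|) * (coshTerm (2 * y) k * (k / y - 1) ^ 2 + coshTerm (2 * y) k * y⁻¹) +
        B * (coshTail y k * (k + 1)) := by
  have hw := coshTerm_nonneg (2 * y) k
  have ht := coshTail_nonneg y k
  rw [← mul_add]
  set u := (k : ℝ) / y - 1 with hu
  by_cases hk : y / 2 ≤ k ∧ (k : ℝ) ≤ 2 * y
  · calc coshTerm (2 * y) k * |c k - 1 + b * u|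
        ≤ coshTerm (2 * y) k * ((C + 4 + 2 * |b|) * (u ^ 2 + y⁻¹)) := by
          gcongr
          refine (hc k hk.1 hk.2).trans ?_
          gcongr
          linarith [abs_nonneg b]
      _ = (C + 4 + 2 * |b|) * (coshTerm (2 * y) k * (u ^ 2 + y⁻¹)) := mul_left_comm _ _ _
      _ ≤ _ := le_add_of_nonneg_right (by positivity)
  · have hout : (k : ℝ) < y / 2 ∨ 2 * y < k := by
      rwa [not_and_or, not_le, not_le] at hk
    have hu_half : 1 / 2 ≤ |u| := by
      rw [le_abs', hu, le_sub_iff_add_le, le_div_iff₀ hy, sub_le_iff_le_add, div_le_iff₀ hy]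
      exact hout.imp (fun h => by linarith) fun h => by linarith
    have hpt : |c k - 1 + b * u| ≤ B * (k + 1) + (C + 4 + 2 * |b|) * u ^ 2 := by
      refine (abs_sub_one_add_mul_le (hcB k) hu_half).trans ?_
      gcongr
      exact le_add_of_nonneg_left hC
    calc coshTerm (2 * y) k * |c k - 1 + b * u|
        ≤ coshTerm (2 * y) k * (B * (k + 1) + (C + 4 + 2 * |b|) * u ^ 2) := by gcongr
      _ = (C + 4 + 2 * |b|) * (coshTerm (2 * y) k * u ^ 2) +
          B * (coshTerm (2 * y) k * (k + 1)) := by ring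
      _ ≤ (C + 4 + 2 * |b|) * (coshTerm (2 * y) k * (u ^ 2 + y⁻¹)) +
          B * (coshTail y k * (k + 1)) := by
        gcongr
        · exact le_add_of_nonneg_right (by positivity)
        · exact coshTerm_le_coshTail hout

lemma abs_hasSum_coshTerm_mul_sub_cosh_le (hy : 0 < y) (hC : 0 ≤ C) (hB : 0 ≤ B)
    (hc : ∀ k : ℕ, y / 2 ≤ k → (k : ℝ) ≤ 2 * y →
      |c k - 1 + b * (k / y - 1)| ≤ C * ((k / y - 1) ^ 2 + y⁻¹))
    (hcB : ∀ k : ℕ, |c k| ≤ B * (k + 1)) {S : ℝ}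
    (hS : HasSum (fun k => coshTerm (2 * y) k * c k) S) :
    |S - cosh (2 * y)| ≤ (4 * C + 16 + 9 * |b|) * (exp (2 * y) * y⁻¹) +
      B * ((2 + 3 * y) * exp (1.7 * y)) := by
  have hdiff := (hS.sub (hasSum_coshTerm (2 * y))).add
    ((hasSum_coshTerm_mul_deviation hy.ne').mul_left b)
  have hmajorant := (((hasSum_coshTerm_mul_deviation_sq hy.ne').add
    ((hasSum_coshTerm (2 * y)).mul_right y⁻¹)).mul_left (C + 4 + 2 * |b|)).add
    ((hasSum_coshTail_mul_add_one y).mul_left B)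
  have hle := hdiff.norm_le_of_bounded hmajorant fun k => by
    rw [norm_eq_abs, show coshTerm (2 * y) k * c k - coshTerm (2 * y) k +
      b * (coshTerm (2 * y) k * (k / y - 1)) =
        coshTerm (2 * y) k * (c k - 1 + b * (k / y - 1)) by ring, abs_mul,
      abs_of_nonneg (coshTerm_nonneg _ _)]
    exact coshTerm_mul_abs_sub_one_add_le hy hC hB hc hcB k
  have hexp : exp (-(2 * y)) ≤ exp (2 * y) * y⁻¹ := by
    rw [le_mul_inv_iff₀ hy, exp_neg, inv_mul_le_iff₀ (exp_pos _), ← exp_add]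
    linarith [add_one_le_exp (2 * y + 2 * y)]
  have hsinh : sinh (2 * y) / (2 * y) ≤ exp (2 * y) * y⁻¹ := by
    rw [div_eq_mul_inv]
    gcongr
    · exact sinh_le_exp _
    · linarith
  have hcosh : cosh (2 * y) * y⁻¹ ≤ exp (2 * y) * y⁻¹ := by
    gcongr
    exact cosh_le_exp (by positivity)
  calc |S - cosh (2 * y)|
      = |(S - cosh (2 * y) + b * -exp (-(2 * y))) + b * exp (-(2 * y))| := by ring_nf
    _ ≤ |S - cosh (2 * y) + b * -exp (-(2 * y))| + |b| * exp (-(2 * y)) := by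
        refine (abs_add_le _ _).trans_eq ?_
        rw [abs_mul b, abs_of_pos (exp_pos _)]
    _ ≤ ((C + 4 + 2 * |b|) * (2 * (exp (2 * y) * y⁻¹) + exp (2 * y) * y⁻¹ + exp (2 * y) * y⁻¹) +
          B * ((2 + 3 * y) * exp (1.7 * y))) + |b| * (exp (2 * y) * y⁻¹) := by
        gcongr
        refine hle.trans ?_
        gcongr
        exact coshTail_sum_le hy.le
    _ = _ := by ring

end Laplace

section LaguerreSum

variable {γ α : ℝ}

lemma coshTerm_two_mul_mul_Gamma (y : ℝ) (k : ℕ) :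
    coshTerm (2 * y) k * Gamma (k + 1 / 2) = √π * ((y ^ 2) ^ k / k.factorial) := by
  induction k with
  | zero =>
    rw [Nat.cast_zero, zero_add, Gamma_one_half_eq]
    simp [coshTerm]
  | succ k ih =>
    have hsucc := coshTerm_succ (2 * y) k
    have hGamma : Gamma ((k + 1 : ℕ) + 1 / 2) = (k + 1 / 2) * Gamma (k + 1 / 2) := by
      rw [← Gamma_add_one (by positivity)]
      push_cast
      ring_nf
    have hk : (k : ℝ) + 1 ≠ 0 := by positivity
    rw [hGamma, Nat.factorial_succ, pow_succ]
    push_cast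
    rw [← mul_right_inj' hk]
    calc ((k : ℝ) + 1) * (coshTerm (2 * y) (k + 1) * ((k + 1 / 2) * Gamma (k + 1 / 2)))
        = coshTerm (2 * y) (k + 1) * ((2 * k + 2) * (2 * k + 1)) / 4 * Gamma (k + 1 / 2) := by ring
      _ = y ^ 2 * (coshTerm (2 * y) k * Gamma (k + 1 / 2)) := by rw [hsucc]; ring
      _ = _ := by rw [ih]; field_simp

/-- The sum `∑ binom(n, k) α ^ k / Γ(k + γ + 1)`, which is `L_n^{(γ)}(-α)` without its prefactor
`Γ(n + γ + 1) / n!`. -/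
noncomputable def laguerreSum (γ α : ℝ) (n : ℕ) : ℝ :=
  ∑ k ∈ Finset.range (n + 1), n.choose k * α ^ k / Gamma (k + γ + 1)

lemma laguerreSum_pos (hγ : -1 < γ) (hα : 0 < α) (n : ℕ) : 0 < laguerreSum γ α n := by
  refine Finset.sum_pos (fun k hk => ?_) ⟨0, by simp⟩
  have hchoose : 0 < n.choose k := Nat.choose_pos (Finset.mem_range_succ_iff.1 hk)
  have hGamma : 0 < Gamma (k + γ + 1) :=
    Gamma_pos_of_pos (by linarith [(k.cast_nonneg : (0 : ℝ) ≤ k)])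
  positivity

lemma lagP_neg_eq (hγ : -1 < γ) (n : ℕ) :
    lagP γ n (-α) = Gamma (n + γ + 1) / n.factorial * laguerreSum γ α n := by
  rw [lagP, laguerreSum, Finset.mul_sum]
  refine Finset.sum_congr rfl fun k hk => ?_
  have hkn : k ≤ n := Finset.mem_range_succ_iff.1 hk
  have hGamma : Gamma (k + γ + 1) ≠ 0 :=
    (Gamma_pos_of_pos (by linarith [(k.cast_nonneg : (0 : ℝ) ≤ k)])).ne'
  rw [genBinom, Gamma_nat_eq_factorial, Nat.cast_sub hkn, neg_neg,
    show (n : ℝ) + γ - (n - k) + 1 = k + γ + 1 by ring, Nat.cast_choose ℝ hkn]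
  field_simp

lemma hasSum_coshTerm_mul_descFactorialRatio_mul_gammaRatio (hα : 0 < α) {n : ℕ} (hn : 0 < n) :
    HasSum (fun k => coshTerm (2 * √(α * n)) k * (descFactorialRatio n k * gammaRatio γ k))
      (√π * laguerreSum γ α n) := by
  have hterm (k : ℕ) : coshTerm (2 * √(α * n)) k * (descFactorialRatio n k * gammaRatio γ k) =
      √π * (n.choose k * α ^ k / Gamma (k + γ + 1)) := calc
    _ = descFactorialRatio n k * (coshTerm (2 * √(α * n)) k * Gamma (k + 1 / 2)) /
        Gamma (k + γ + 1) := by rw [gammaRatio]; ring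
    _ = _ := by
      rw [coshTerm_two_mul_mul_Gamma, sq_sqrt (by positivity), descFactorialRatio,
        Nat.descFactorial_eq_factorial_mul_choose, mul_pow]
      push_cast
      have : (n : ℝ) ≠ 0 := Nat.cast_ne_zero.2 hn.ne'
      field_simp
  simp only [hterm]
  refine (hasSum_sum_of_ne_finset_zero fun k hk => ?_).mul_left √π
  rw [Nat.choose_eq_zero_of_lt (by simpa using hk), Nat.cast_zero, zero_mul, zero_div]

end LaguerreSum

section LaplaceCoeff

variable {γ α : ℝ}

lemma abs_log_descFactorialRatio_add_deviation_le {y : ℝ} {n k : ℕ} (hα : 0 < α) (hy : 0 < y)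
    (hyn : y ^ 2 = α * n) (hkn : 2 * k ≤ n) (hky : (k : ℝ) ≤ 2 * y) :
    |log (descFactorialRatio n k) + α / 2 + α * (k / y - 1)| ≤
      (α + 16 * α ^ 2) * ((k / y - 1) ^ 2 + y⁻¹) := by
  have hn : 0 < n := by
    rw [Nat.pos_iff_ne_zero]
    rintro rfl
    exact (pow_pos hy 2).ne' (by simpa using hyn)
  have hninv : (n : ℝ)⁻¹ = α / y ^ 2 := by rw [hyn]; field_simp
  have hlinear : (k : ℝ) / (2 * n) ≤ α * y⁻¹ := calc
    (k : ℝ) / (2 * n) = k * (n : ℝ)⁻¹ / 2 := by ring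
    _ ≤ 2 * y * (α / y ^ 2) / 2 := by rw [hninv]; gcongr
    _ = α * y⁻¹ := by field_simp
  have hcubic : 2 * (k : ℝ) ^ 3 / n ^ 2 ≤ 16 * α ^ 2 * y⁻¹ := calc
    2 * (k : ℝ) ^ 3 / n ^ 2 = 2 * k ^ 3 * (n : ℝ)⁻¹ ^ 2 := by ring
    _ ≤ 2 * (2 * y) ^ 3 * (α / y ^ 2) ^ 2 := by rw [hninv]; gcongr
    _ = 16 * α ^ 2 * y⁻¹ := by field_simp; ring
  have hsq : (k : ℝ) ^ 2 / (2 * n) = α / 2 * (k / y) ^ 2 := calc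
    (k : ℝ) ^ 2 / (2 * n) = k ^ 2 * (n : ℝ)⁻¹ / 2 := by ring
    _ = α / 2 * (k / y) ^ 2 := by rw [hninv]; ring
  set u := (k : ℝ) / y - 1 with hu
  calc |log (descFactorialRatio n k) + α / 2 + α * u|
      = |(log (descFactorialRatio n k) + (k : ℝ) ^ 2 / (2 * n)) - α / 2 * u ^ 2| := by
        rw [hsq, hu]; ring_nf
    _ ≤ (α * y⁻¹ + 16 * α ^ 2 * y⁻¹) + α / 2 * u ^ 2 := by
        refine (abs_sub _ _).trans (add_le_add ?_ (abs_of_nonneg (by positivity)).le)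
        exact (abs_log_descFactorialRatio_add_le hn hkn).trans (add_le_add hlinear hcubic)
    _ ≤ (α + 16 * α ^ 2) * (u ^ 2 + y⁻¹) := by
        nlinarith [mul_nonneg hα.le (sq_nonneg u), mul_nonneg (sq_nonneg α) (sq_nonneg u)]

lemma exists_abs_log_gammaRatio_add_deviation_le (hγ : -1 < γ) : ∃ K : ℝ, 0 ≤ K ∧
    ∀ᶠ y : ℝ in atTop, ∀ k : ℕ, y / 2 ≤ k →
      |log (gammaRatio γ k) + (γ + 1 / 2) * log y + (γ + 1 / 2) * (k / y - 1)| ≤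
        K * ((k / y - 1) ^ 2 + y⁻¹) := by
  obtain ⟨C, hC, hbound⟩ := (isBigO_log_gammaRatio hγ).exists_nonneg
  obtain ⟨N, hN⟩ := eventually_atTop.1 hbound.bound
  refine ⟨2 * C + 2 * |γ + 1 / 2|, by positivity, ?_⟩
  filter_upwards [eventually_gt_atTop 0, eventually_ge_atTop (2 * N : ℝ)] with y hy hyN k hky
  have hk : 0 < (k : ℝ) := by linarith
  have hkinv : (k : ℝ)⁻¹ ≤ 2 * y⁻¹ := by
    rw [inv_le_comm₀ hk (by positivity), mul_inv, inv_inv]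
    linarith
  have hu : -(1 / 2) ≤ (k : ℝ) / y - 1 := by
    rw [le_sub_iff_add_le, le_div_iff₀ hy]
    linarith
  have hlog : log k = log y + log (1 + (k / y - 1)) := by
    rw [add_sub_cancel, log_div hk.ne' hy.ne', add_sub_cancel]
  have hRatio : |log (gammaRatio γ k) + (γ + 1 / 2) * log k| ≤ C * (2 * y⁻¹) := by
    have hkN : N ≤ k := Nat.cast_le.1 (by linarith : (N : ℝ) ≤ k)
    refine (hN k hkN).trans ?_
    rw [norm_inv, norm_natCast]
    gcongr
  have hexpand := abs_log_one_add_sub_le hu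
  set u := (k : ℝ) / y - 1
  calc |log (gammaRatio γ k) + (γ + 1 / 2) * log y + (γ + 1 / 2) * u|
      = |(log (gammaRatio γ k) + (γ + 1 / 2) * log k) -
          (γ + 1 / 2) * (log (1 + u) - u)| := by rw [hlog]; ring_nf
    _ ≤ C * (2 * y⁻¹) + |γ + 1 / 2| * (2 * u ^ 2) := by
        refine (abs_sub _ _).trans (add_le_add hRatio ?_)
        rw [abs_mul]
        gcongr
    _ ≤ (2 * C + 2 * |γ + 1 / 2|) * (u ^ 2 + y⁻¹) := by
        nlinarith [mul_nonneg hC (sq_nonneg u),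
          mul_nonneg (abs_nonneg (γ + 1 / 2)) (inv_nonneg.2 hy.le)]

/-- The coefficients that turn the `cosh` series at `2 √(αn)` into the Laguerre sum, normalized so
that they are `1` to leading order near `k = √(αn)`. -/
noncomputable def laplaceCoeff (γ α : ℝ) (n k : ℕ) : ℝ :=
  exp (α / 2) * √(α * n) ^ (γ + 1 / 2) * (descFactorialRatio n k * gammaRatio γ k)

lemma abs_laplaceCoeff_le (hγ : -1 < γ) (n k : ℕ) :
    |laplaceCoeff γ α n k| ≤ exp (α / 2) * max (gammaRatio γ 0) (gammaRatio γ 1) *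
      √(α * n) ^ (γ + 1 / 2) * (k + 1) := by
  have hD := descFactorialRatio_nonneg n k
  have hR := (gammaRatio_pos hγ k).le
  rw [laplaceCoeff, abs_of_nonneg (by positivity)]
  calc exp (α / 2) * √(α * n) ^ (γ + 1 / 2) * (descFactorialRatio n k * gammaRatio γ k)
      ≤ exp (α / 2) * √(α * n) ^ (γ + 1 / 2) *
          (1 * (max (gammaRatio γ 0) (gammaRatio γ 1) * (k + 1))) := by
        gcongr
        · exact descFactorialRatio_le_one n k
        · exact gammaRatio_le hγ k
    _ = _ := by ring

lemma log_laplaceCoeff (hγ : -1 < γ) {n k : ℕ} (hn : 0 < n) (hk : k ≤ n) (hα : 0 < α) :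
    log (laplaceCoeff γ α n k) = α / 2 + (γ + 1 / 2) * log √(α * n) +
      (log (descFactorialRatio n k) + log (gammaRatio γ k)) := by
  have hD := descFactorialRatio_pos hn hk
  have hR := gammaRatio_pos hγ k
  have hy : 0 < √(α * n) := by positivity
  rw [laplaceCoeff, log_mul (by positivity) (by positivity),
    log_mul (by positivity) (by positivity), log_mul hD.ne' hR.ne', log_exp, log_rpow hy]

lemma laplaceCoeff_pos (hγ : -1 < γ) (hα : 0 < α) {n k : ℕ} (hn : 0 < n) (hk : k ≤ n) :
    0 < laplaceCoeff γ α n k := by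
  have hD := descFactorialRatio_pos hn hk
  have hR := gammaRatio_pos hγ k
  unfold laplaceCoeff
  positivity

lemma tendsto_sqrt_mul_natCast_atTop (hα : 0 < α) :
    Tendsto (fun n : ℕ => √(α * n)) atTop atTop :=
  tendsto_sqrt_atTop.comp (tendsto_natCast_atTop_atTop.const_mul_atTop hα)

lemma exists_abs_laplaceCoeff_sub_one_add_le (hγ : -1 < γ) (hα : 0 < α) : ∃ C : ℝ, 0 ≤ C ∧
    ∀ᶠ n : ℕ in atTop, ∀ k : ℕ, √(α * n) / 2 ≤ k → (k : ℝ) ≤ 2 * √(α * n) →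
      |laplaceCoeff γ α n k - 1 + (γ + 1 / 2 + α) * (k / √(α * n) - 1)| ≤
        C * ((k / √(α * n) - 1) ^ 2 + (√(α * n))⁻¹) := by
  obtain ⟨K, hK, hRatio⟩ := exists_abs_log_gammaRatio_add_deviation_le hγ
  set b := γ + 1 / 2 + α with hb
  set L := α + 16 * α ^ 2 + K with hL
  refine ⟨L + (2 * b ^ 2 + 4 * L ^ 2) * exp (|b| + 2 * L), by positivity, ?_⟩
  filter_upwards [(tendsto_sqrt_mul_natCast_atTop hα).eventually hRatio,
    (tendsto_sqrt_mul_natCast_atTop hα).eventually_ge_atTop 1,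
    (tendsto_sqrt_mul_natCast_atTop hα).eventually_ge_atTop (4 * α), eventually_gt_atTop 0]
    with n hRatio hy₁ hyα hn k hk₁ hk₂
  have hyn : √(α * n) ^ 2 = α * n := sq_sqrt (by positivity)
  set y := √(α * n) with hy_def
  have hy : 0 < y := by linarith
  have hkn : 2 * k ≤ n := by
    have hαk : α * (2 * k) ≤ α * n := by nlinarith
    exact_mod_cast le_of_mul_le_mul_left hαk hα
  have hu : |(k : ℝ) / y - 1| ≤ 1 := by
    rw [abs_sub_le_iff, sub_le_iff_le_add, sub_le_iff_le_add, div_le_iff₀ hy]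
    exact ⟨by linarith, by linarith [show 0 ≤ (k : ℝ) / y by positivity]⟩
  have hδ : ((k : ℝ) / y - 1) ^ 2 + y⁻¹ ≤ 2 := by
    linarith [inv_le_one_of_one_le₀ hy₁, (sq_le_one_iff_abs_le_one _).2 hu]
  have hlog : |log (laplaceCoeff γ α n k) + b * (k / y - 1)| ≤
      L * ((k / y - 1) ^ 2 + y⁻¹) := by
    rw [log_laplaceCoeff hγ hn (by omega) hα, hL, add_mul _ K, ← hy_def]
    refine le_trans (le_of_eq ?_) ((abs_add_le _ _).trans (add_le_add
      (abs_log_descFactorialRatio_add_deviation_le hα hy hyn hkn hk₂) (hRatio k hk₁)))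
    rw [hb]
    ring_nf
  rw [← exp_log (laplaceCoeff_pos hγ hα hn (by omega : k ≤ n))]
  exact abs_exp_sub_one_add_mul_le hlog hu (le_add_of_nonneg_right (by positivity)) hδ
    (by positivity)

end LaplaceCoeff

section Perron

variable {γ α : ℝ}

lemma eventually_rpow_mul_exp_le_exp_mul_inv (q : ℝ) : ∀ᶠ y : ℝ in atTop,
    y ^ q * ((2 + 3 * y) * exp (1.7 * y)) ≤ exp (2 * y) * y⁻¹ := by
  have hdecay : ∀ᶠ y : ℝ in atTop, y ^ (q + 1 + 1) * exp (-0.3 * y) < 1 / 5 :=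
    (tendsto_rpow_mul_exp_neg_mul_atTop_nhds_zero (q + 1 + 1) 0.3
      (by norm_num)).eventually_lt_const (by norm_num)
  filter_upwards [hdecay, eventually_ge_atTop 1] with y hdecay hy
  have hy0 : 0 < y := by linarith
  rw [rpow_add_one hy0.ne', rpow_add_one hy0.ne'] at hdecay
  rw [le_mul_inv_iff₀ hy0]
  calc y ^ q * ((2 + 3 * y) * exp (1.7 * y)) * y
      ≤ y ^ q * ((5 * y) * exp (1.7 * y)) * y := by gcongr; linarith
    _ = 5 * (y ^ q * y * y * exp (-0.3 * y)) * exp (2 * y) := by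
      rw [show 1.7 * y = -0.3 * y + 2 * y by ring, exp_add]
      ring
    _ ≤ 1 * exp (2 * y) := by gcongr; linarith
    _ = exp (2 * y) := one_mul _

lemma abs_mul_two_mul_exp_neg_sub_one_le {S K y : ℝ} (hy : 0 < y)
    (hS : |S - cosh (2 * y)| ≤ K * (exp (2 * y) * y⁻¹)) :
    |S * (2 * exp (-(2 * y))) - 1| ≤ (2 * K + 1) * y⁻¹ := by
  have hE : exp (2 * y) * exp (-(2 * y)) = 1 := by rw [← exp_add, add_neg_cancel, exp_zero]
  have hsmall : exp (-(2 * y)) * exp (-(2 * y)) ≤ y⁻¹ := by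
    rw [← exp_add, ← neg_add, exp_neg]
    exact inv_anti₀ hy (by linarith [add_one_le_exp (2 * y + 2 * y)])
  have hcosh : cosh (2 * y) * (2 * exp (-(2 * y))) = 1 + exp (-(2 * y)) * exp (-(2 * y)) := by
    rw [cosh_eq, ← hE]
    ring
  calc |S * (2 * exp (-(2 * y))) - 1|
      = |(S - cosh (2 * y)) * (2 * exp (-(2 * y))) + exp (-(2 * y)) * exp (-(2 * y))| := by
        rw [sub_mul, hcosh]
        ring_nf
    _ ≤ K * (exp (2 * y) * y⁻¹) * (2 * exp (-(2 * y))) + y⁻¹ := by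
        refine (abs_add_le _ _).trans (add_le_add ?_ ?_)
        · rw [abs_mul, abs_of_pos (by positivity : 0 < 2 * exp (-(2 * y)))]
          gcongr
        · rwa [abs_of_pos (by positivity)]
    _ = (2 * K + 1) * y⁻¹ := by linear_combination 2 * K * y⁻¹ * hE

lemma isBigO_laguerreSum_sub_one (hγ : -1 < γ) (hα : 0 < α) :
    (fun n : ℕ => exp (α / 2) * √(α * n) ^ (γ + 1 / 2) * (√π * laguerreSum γ α n) *
      (2 * exp (-(2 * √(α * n)))) - 1) =O[atTop] fun n : ℕ => (√n)⁻¹ := by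
  obtain ⟨C, hC, hcoeff⟩ := exists_abs_laplaceCoeff_sub_one_add_le hγ hα
  set B := exp (α / 2) * max (gammaRatio γ 0) (gammaRatio γ 1) with hB
  have hB0 : 0 < B := mul_pos (exp_pos _) (lt_max_of_lt_left (gammaRatio_pos hγ 0))
  set K := 4 * C + 16 + 9 * |γ + 1 / 2 + α| + B with hK
  have hyto := tendsto_sqrt_mul_natCast_atTop hα
  refine IsBigO.of_bound ((2 * K + 1) * (√α)⁻¹) ?_
  filter_upwards [hcoeff, hyto.eventually (eventually_rpow_mul_exp_le_exp_mul_inv (γ + 1 / 2)),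
    hyto.eventually_gt_atTop 0, eventually_gt_atTop 0] with n hcoeff htail hy hn
  have hsum : HasSum (fun k => coshTerm (2 * √(α * n)) k * laplaceCoeff γ α n k)
      (exp (α / 2) * √(α * n) ^ (γ + 1 / 2) * (√π * laguerreSum γ α n)) :=
    ((hasSum_coshTerm_mul_descFactorialRatio_mul_gammaRatio hα hn).mul_left _).congr_fun
      fun k => mul_left_comm _ _ _
  have hLaplace := abs_hasSum_coshTerm_mul_sub_cosh_le hy hC (by positivity) hcoeff
    (abs_laplaceCoeff_le hγ n) hsum
  rw [norm_eq_abs, norm_of_nonneg (by positivity), mul_assoc (2 * K + 1), ← mul_inv,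
    ← sqrt_mul hα.le]
  refine abs_mul_two_mul_exp_neg_sub_one_le hy (hLaplace.trans ?_)
  rw [hK, add_mul _ B, ← hB, mul_assoc B]
  gcongr

lemma tendsto_inv_sqrt_natCast : Tendsto (fun n : ℕ => (√n)⁻¹) atTop (𝓝 0) :=
  tendsto_inv_atTop_zero.comp (tendsto_sqrt_atTop.comp tendsto_natCast_atTop_atTop)

lemma isBigO_inv_natCast_inv_sqrt :
    (fun n : ℕ => (n : ℝ)⁻¹) =O[atTop] fun n : ℕ => (√n)⁻¹ := by
  refine IsBigO.of_bound 1 ?_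
  filter_upwards [eventually_ge_atTop 1] with n hn
  have hn' : (1 : ℝ) ≤ n := mod_cast hn
  rw [norm_of_nonneg (by positivity), norm_of_nonneg (by positivity), one_mul]
  exact inv_anti₀ (by positivity) (sqrt_le_self_iff.2 (Or.inr hn'))

lemma isBigO_log_laguerreSum_sub (hγ : -1 < γ) (hα : 0 < α) :
    (fun n : ℕ => log (laguerreSum γ α n) - (2 * √(α * n) - log 2 - log π / 2 - α / 2 -
      (γ + 1 / 2) * log (α * n) / 2)) =O[atTop] fun n : ℕ => (√n)⁻¹ := by
  refine (isBigO_log_of_isBigO_sub_one (isBigO_laguerreSum_sub_one hγ hα)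
    tendsto_inv_sqrt_natCast).congr' ?_ EventuallyEq.rfl
  filter_upwards [eventually_gt_atTop 0] with n hn
  have hsum := laguerreSum_pos hγ hα n
  have hy : 0 < √(α * n) := by positivity
  have hpow : 0 < √(α * n) ^ (γ + 1 / 2) := by positivity
  rw [log_mul (by positivity) (by positivity), log_mul (by positivity) (by positivity),
    log_mul (by positivity) hpow.ne', log_mul (by positivity) hsum.ne',
    log_mul (by positivity) (by positivity), log_exp, log_exp, log_rpow hy,
    log_sqrt (by positivity), log_sqrt (by positivity)]
  ring

lemma isBigO_log_Gamma_div_factorial_sub (hγ : -1 < γ) :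
    (fun n : ℕ => log (Gamma (n + γ + 1) / n.factorial) - γ * log n) =O[atTop]
      fun n : ℕ => (n : ℝ)⁻¹ := by
  refine ((isBigO_log_Gamma_add_sub (γ + 1)).comp_tendsto
    tendsto_natCast_atTop_atTop).congr' ?_ EventuallyEq.rfl
  filter_upwards [eventually_gt_atTop 0] with n hn
  have hn' : (0 : ℝ) < n := Nat.cast_pos.2 hn
  rw [Function.comp_apply, ← Gamma_nat_eq_factorial, Gamma_add_one hn'.ne',
    log_div (Gamma_pos_of_pos (by linarith)).ne' (mul_pos hn' (Gamma_pos_of_pos hn')).ne',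
    log_mul hn'.ne' (Gamma_pos_of_pos hn').ne', add_assoc]
  ring

lemma Gamma_div_factorial_pos (hγ : -1 < γ) (n : ℕ) : 0 < Gamma (n + γ + 1) / n.factorial :=
  div_pos (Gamma_pos_of_pos (by linarith [(n.cast_nonneg : (0 : ℝ) ≤ n)]))
    (Nat.cast_pos.2 n.factorial_pos)

lemma lagP_neg_pos (hγ : -1 < γ) (hα : 0 < α) (n : ℕ) : 0 < lagP γ n (-α) := by
  rw [lagP_neg_eq hγ]
  exact mul_pos (Gamma_div_factorial_pos hγ n) (laguerreSum_pos hγ hα n)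

lemma isBigO_log_lagP_neg_sub (hγ : -1 < γ) (hα : 0 < α) :
    (fun n : ℕ => log (lagP γ n (-α)) - (2 * √(α * n) + (γ / 2 - 1 / 4) * log n - α / 2 -
      (γ / 2 + 1 / 4) * log α - log (2 * √π))) =O[atTop] fun n : ℕ => (√n)⁻¹ := by
  refine (((isBigO_log_Gamma_div_factorial_sub hγ).trans isBigO_inv_natCast_inv_sqrt).add
    (isBigO_log_laguerreSum_sub hγ hα)).congr' ?_ EventuallyEq.rfl
  filter_upwards [eventually_gt_atTop 0] with n hn
  rw [lagP_neg_eq hγ, log_mul (Gamma_div_factorial_pos hγ n).ne' (laguerreSum_pos hγ hα n).ne',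
    log_mul hα.ne' (Nat.cast_ne_zero.2 hn.ne'), log_mul two_ne_zero (by positivity),
    log_sqrt pi_pos.le]
  ring

end Perron

section Orthonormal

variable {γ α : ℝ}

lemma genBinom_natCast_add (γ : ℝ) (n : ℕ) :
    genBinom (n + γ) n = Gamma (n + γ + 1) / n.factorial / Gamma (γ + 1) := by
  rw [genBinom, Gamma_nat_eq_factorial, add_sub_cancel_left, div_div]

lemma genBinom_natCast_add_pos (hγ : -1 < γ) (n : ℕ) : 0 < genBinom (n + γ) n := by
  rw [genBinom_natCast_add]
  exact div_pos (Gamma_div_factorial_pos hγ n) (Gamma_pos_of_pos (by linarith))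

lemma abs_lagOrth_zero (hγ : -1 < γ) (hα : 0 < α) (n : ℕ) :
    |lagOrth γ α n 0| = lagP γ n (-α) / √(genBinom (n + γ) n) := by
  rw [lagOrth, zero_sub, abs_mul, abs_div, abs_neg_one_pow, abs_of_nonneg (sqrt_nonneg _),
    abs_of_pos (lagP_neg_pos hγ hα n), one_div_mul_eq_div]

lemma lagOrth_zero_eq (hγ : -1 < γ) (hα : 0 < α) (n : ℕ) :
    lagOrth γ α n 0 = (-1) ^ n * |lagOrth γ α n 0| := by
  rw [abs_lagOrth_zero hγ hα, lagOrth, zero_sub, div_mul_eq_mul_div, mul_div_assoc]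

lemma lagOrth_zero_ne_zero (hγ : -1 < γ) (hα : 0 < α) (n : ℕ) : lagOrth γ α n 0 ≠ 0 := by
  rw [← abs_pos, abs_lagOrth_zero hγ hα]
  exact div_pos (lagP_neg_pos hγ hα n) (sqrt_pos.2 (genBinom_natCast_add_pos hγ n))

lemma lagOrth_zero_mul_lagOrth_succ_zero (hγ : -1 < γ) (hα : 0 < α) (n : ℕ) :
    lagOrth γ α n 0 * lagOrth γ α (n + 1) 0 =
      -(|lagOrth γ α n 0| * |lagOrth γ α (n + 1) 0|) := by
  have hsign : ((-1 : ℝ) ^ n) * (-1) ^ (n + 1) = -1 := by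
    rw [← pow_add, Odd.neg_one_pow ⟨n, by ring⟩]
  rw [lagOrth_zero_eq hγ hα n, lagOrth_zero_eq hγ hα (n + 1), mul_mul_mul_comm, hsign, neg_one_mul,
    ← lagOrth_zero_eq hγ hα n, ← lagOrth_zero_eq hγ hα (n + 1)]

/-- The constant `A` in `P_n(0)² ∼ A e^{4√(αn)} / √n`. -/
noncomputable def lagOrthAmplitude (γ α : ℝ) : ℝ :=
  Gamma (γ + 1) / (4 * π * α ^ (γ + 1 / 2) * exp α)

lemma lagOrthAmplitude_pos (hγ : -1 < γ) (hα : 0 < α) : 0 < lagOrthAmplitude γ α :=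
  div_pos (Gamma_pos_of_pos (by linarith)) (by positivity)

lemma log_lagOrthAmplitude (hγ : -1 < γ) (hα : 0 < α) :
    log (lagOrthAmplitude γ α) =
      log (Gamma (γ + 1)) - 2 * log (2 * √π) - (γ + 1 / 2) * log α - α := by
  have hpow : 0 < α ^ (γ + 1 / 2) := rpow_pos_of_pos hα _
  have h4π : 4 * π = (2 * √π) ^ 2 := by rw [mul_pow, sq_sqrt pi_pos.le]; norm_num
  rw [lagOrthAmplitude, log_div (Gamma_pos_of_pos (by linarith)).ne' (by positivity),
    log_mul (by positivity) (by positivity), log_mul (by positivity) hpow.ne', log_exp,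
    log_rpow hα, h4π, log_pow]
  push_cast
  ring

lemma isBigO_log_abs_lagOrth_zero_sub (hγ : -1 < γ) (hα : 0 < α) :
    (fun n : ℕ => log |lagOrth γ α n 0| - (2 * √α * √n - log n / 4 +
      log (lagOrthAmplitude γ α) / 2)) =O[atTop] fun n : ℕ => (√n)⁻¹ := by
  refine ((isBigO_log_lagP_neg_sub hγ hα).sub (((isBigO_log_Gamma_div_factorial_sub hγ).trans
    isBigO_inv_natCast_inv_sqrt).const_mul_left (1 / 2))).congr_left fun n => ?_
  rw [abs_lagOrth_zero hγ hα, log_div (lagP_neg_pos hγ hα n).ne'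
    (sqrt_pos.2 (genBinom_natCast_add_pos hγ n)).ne', log_sqrt (genBinom_natCast_add_pos hγ n).le,
    genBinom_natCast_add, log_div (Gamma_div_factorial_pos hγ n).ne'
    (Gamma_pos_of_pos (by linarith)).ne', log_lagOrthAmplitude hγ hα, sqrt_mul hα.le]
  ring

end Orthonormal

section RelativeError

variable {ι : Type*} {l : Filter ι} {f g h : ι → ℝ}

lemma isBigO_log_sub_log_iff (hf : ∀ᶠ i in l, 0 < f i) (hg : ∀ᶠ i in l, 0 < g i)
    (hh : Tendsto h l (𝓝 0)) :
    (fun i => log (f i) - log (g i)) =O[l] h ↔ (fun i => f i - g i) =O[l] fun i => g i * h i := by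
  have hlog : (fun i => log (f i / g i)) =ᶠ[l] fun i => log (f i) - log (g i) := by
    filter_upwards [hf, hg] with i hf hg
    exact log_div hf.ne' hg.ne'
  have hexp : (fun i => exp (log (f i / g i)) - 1) =ᶠ[l] fun i => f i / g i - 1 := by
    filter_upwards [hf, hg] with i hf hg
    rw [exp_log (div_pos hf hg)]
  have hmul : (fun i => f i - g i) =ᶠ[l] fun i => g i * (f i / g i - 1) := by
    filter_upwards [hg] with i hg
    field_simp
  have hdiv : (fun i => f i / g i - 1) =ᶠ[l] fun i => (g i)⁻¹ * (f i - g i) := by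
    filter_upwards [hg] with i hg
    field_simp
  have hcancel : (fun i => (g i)⁻¹ * (g i * h i)) =ᶠ[l] h := by
    filter_upwards [hg] with i hg
    exact inv_mul_cancel_left₀ hg.ne' _
  refine ⟨fun hO => ?_, fun hO => ?_⟩
  · have hO' := hexp.symm.trans_isBigO (isBigO_exp_sub_one (hlog.trans_isBigO hO) hh)
    exact hmul.trans_isBigO ((isBigO_refl g l).mul hO')
  · have hO' := hdiv.trans_isBigO (((isBigO_refl (fun i => (g i)⁻¹) l).mul hO).trans_eventuallyEq
      hcancel)
    exact hlog.symm.trans_isBigO (isBigO_log_of_isBigO_sub_one hO' hh)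

end RelativeError

section Summation

lemma isBigO_of_isBigO_succ_sub {a G : ℕ → ℝ}
    (ha : (fun n => a (n + 1) - a n) =O[atTop] fun n => G (n + 1) - G n)
    (hmono : ∀ᶠ n in atTop, G n ≤ G (n + 1)) (hpos : ∀ᶠ n in atTop, 0 < G n) : a =O[atTop] G := by
  obtain ⟨K, hK, hbound⟩ := ha.exists_nonneg
  obtain ⟨N, hN⟩ := eventually_atTop.1 (hbound.bound.and (hmono.and hpos))
  have hGN : 0 < G N := (hN N le_rfl).2.2
  have htelescope : ∀ n, N ≤ n → |a n| ≤ |a N| + K * (G n - G N) := by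
    intro n hn
    induction n, hn using Nat.le_induction with
    | base => rw [sub_self, mul_zero, add_zero]
    | succ n hn ih =>
      obtain ⟨hstep, hle, -⟩ := hN n hn
      rw [norm_eq_abs, norm_of_nonneg (sub_nonneg.2 hle)] at hstep
      calc |a (n + 1)| = |(a (n + 1) - a n) + a n| := by rw [sub_add_cancel]
        _ ≤ K * (G (n + 1) - G n) + (|a N| + K * (G n - G N)) :=
          (abs_add_le _ _).trans (add_le_add hstep ih)
        _ = |a N| + K * (G (n + 1) - G N) := by ring
  have hGle : ∀ n, N ≤ n → G N ≤ G n := fun n hn =>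
    Nat.le_induction le_rfl (fun m hm ih => ih.trans (hN m hm).2.1) n hn
  refine IsBigO.of_bound (|a N| / G N + K) ?_
  filter_upwards [eventually_ge_atTop N] with n hn
  rw [norm_eq_abs, norm_of_nonneg (hGN.le.trans (hGle n hn))]
  calc |a n| ≤ |a N| / G N * G N + K * (G n - G N) := by
        rw [div_mul_cancel₀ _ hGN.ne']
        exact htelescope n hn
    _ ≤ |a N| / G N * G n + K * G n := by
        gcongr
        · exact hGle n hn
        · exact sub_le_self _ hGN.le
    _ = (|a N| / G N + K) * G n := (add_mul _ _ _).symm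

lemma sqrt_add_one_sub_sqrt {x : ℝ} (hx : 0 ≤ x) : √(x + 1) - √x = (√(x + 1) + √x)⁻¹ := by
  refine eq_inv_of_mul_eq_one_left ?_
  rw [mul_comm, ← sq_sub_sq, sq_sqrt (by linarith), sq_sqrt hx, add_sub_cancel_left]

lemma sqrt_add_one_sub_sqrt_le {x : ℝ} (hx : 0 < x) : √(x + 1) - √x ≤ (2 * √x)⁻¹ := by
  rw [sqrt_add_one_sub_sqrt hx.le, two_mul]
  gcongr
  linarith

lemma inv_two_mul_sqrt_add_one_le {x : ℝ} (hx : 0 ≤ x) :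
    (2 * √(x + 1))⁻¹ ≤ √(x + 1) - √x := by
  rw [sqrt_add_one_sub_sqrt hx, two_mul]
  gcongr
  linarith

lemma abs_sqrt_add_one_sub_sqrt_sub_le {x : ℝ} (hx : 1 ≤ x) :
    |√(x + 1) - √x - (2 * √x)⁻¹| ≤ x⁻¹ := by
  have hr : 1 ≤ √x := one_le_sqrt.2 hx
  have hinv : (2 * √x)⁻¹ ≤ 1 := inv_le_one_of_one_le₀ (by linarith)
  have hd₁ := sqrt_add_one_sub_sqrt_le (by linarith : 0 < x)
  have hd₀ : 0 ≤ √(x + 1) - √x := sub_nonneg.2 (sqrt_le_sqrt (by linarith))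
  have hquot : (2 * √x)⁻¹ - (√(x + 1) - √x) = (2 * √x)⁻¹ * (√(x + 1) - √x) ^ 2 := by
    have hx1 : √(x + 1) ^ 2 = √x ^ 2 + 1 := by rw [sq_sqrt (by linarith), sq_sqrt (by linarith)]
    field_simp
    linear_combination -hx1
  rw [abs_sub_comm, hquot, abs_of_nonneg (by positivity)]
  calc (2 * √x)⁻¹ * (√(x + 1) - √x) ^ 2 ≤ 1 * ((2 * √x)⁻¹) ^ 2 := by gcongr
    _ = (4 * x)⁻¹ := by rw [one_mul, inv_pow, mul_pow, sq_sqrt (by linarith)]; norm_num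
    _ ≤ x⁻¹ := inv_anti₀ (by linarith) (by linarith)

lemma abs_exp_mul_sqrt_add_one_sub_le (β : ℝ) {x : ℝ} (hx : 1 ≤ x) :
    |exp (β * √(x + 1)) - exp (β * √x) - β / 2 * (exp (β * √x) / √x)| ≤
      (β ^ 2 * exp |β| + |β|) * (exp (β * √x) / x) := by
  have hx0 : 0 < x := by linarith
  have hr : 1 ≤ √x := one_le_sqrt.2 hx
  have hd_le := sqrt_add_one_sub_sqrt_le hx0
  have hd_approx := abs_sqrt_add_one_sub_sqrt_sub_le hx
  have hd_nonneg : 0 ≤ √(x + 1) - √x := sub_nonneg.2 (sqrt_le_sqrt (by linarith))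
  have hsplit : √(x + 1) = √x + (√(x + 1) - √x) := (add_sub_cancel _ _).symm
  set d := √(x + 1) - √x
  have hd_one : d ≤ 1 := hd_le.trans (inv_le_one_of_one_le₀ (by linarith))
  have hd_sq : d ^ 2 ≤ x⁻¹ := calc
    d ^ 2 ≤ ((√x)⁻¹) ^ 2 := by
      gcongr
      exact hd_le.trans (inv_anti₀ (by positivity) (by linarith))
    _ = x⁻¹ := by rw [inv_pow, sq_sqrt hx0.le]
  have hβd : |β * d| ≤ |β| := by
    rw [abs_mul, abs_of_nonneg hd_nonneg]
    exact mul_le_of_le_one_right (abs_nonneg β) hd_one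
  have hexp : |exp (β * d) - 1 - β * d| ≤ β ^ 2 * exp |β| * x⁻¹ := calc
    _ ≤ (β * d) ^ 2 * exp |β * d| := abs_exp_sub_one_sub_le _
    _ ≤ β ^ 2 * x⁻¹ * exp |β| := by rw [mul_pow]; gcongr
    _ = β ^ 2 * exp |β| * x⁻¹ := by ring
  calc |exp (β * √(x + 1)) - exp (β * √x) - β / 2 * (exp (β * √x) / √x)|
      = exp (β * √x) * |(exp (β * d) - 1 - β * d) + β * (d - (2 * √x)⁻¹)| := by
        rw [← abs_of_pos (exp_pos (β * √x)), ← abs_mul, abs_of_pos (exp_pos _), hsplit, mul_add,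
          exp_add]
        congr 1
        field_simp
        ring
    _ ≤ exp (β * √x) * (β ^ 2 * exp |β| * x⁻¹ + |β| * x⁻¹) := by
        gcongr
        refine (abs_add_le _ _).trans (add_le_add hexp ?_)
        rw [abs_mul]
        gcongr
    _ = (β ^ 2 * exp |β| + |β|) * (exp (β * √x) / x) := by ring

lemma isBigO_exp_mul_sqrt_succ_sub (β : ℝ) :
    (fun n : ℕ => exp (β * √(n + 1)) - exp (β * √n) - β / 2 * (exp (β * √n) / √n)) =O[atTop]
      fun n : ℕ => exp (β * √n) / n := by
  refine IsBigO.of_bound (β ^ 2 * exp |β| + |β|) ?_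
  filter_upwards [eventually_ge_atTop 1] with n hn
  rw [norm_eq_abs, norm_of_nonneg (by positivity)]
  exact abs_exp_mul_sqrt_add_one_sub_le β (mod_cast hn)

lemma eventually_exp_mul_sqrt_div_le_succ_sub {β : ℝ} (hβ : 0 < β) : ∀ᶠ n : ℕ in atTop,
    exp (β * √n) / n ≤ 8 / β * (exp (β * √(n + 1)) / √(n + 1) - exp (β * √n) / √n) := by
  filter_upwards [eventually_ge_atTop 1, (tendsto_sqrt_atTop.comp
    tendsto_natCast_atTop_atTop).eventually_ge_atTop (2 / β)] with n hn hβr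
  have hx : (1 : ℝ) ≤ n := mod_cast hn
  rw [Function.comp_apply] at hβr
  generalize (n : ℝ) = x at hx hβr
  have hx0 : 0 < x := by linarith
  have hd := inv_two_mul_sqrt_add_one_le hx0.le
  have hsplit : √(x + 1) = √x + (√(x + 1) - √x) := (add_sub_cancel _ _).symm
  have hexp : exp (β * √x) * (1 + β * (√(x + 1) - √x)) ≤ exp (β * √(x + 1)) := calc
    _ ≤ exp (β * √x) * exp (β * (√(x + 1) - √x)) := by
      gcongr
      linarith [add_one_le_exp (β * (√(x + 1) - √x))]
    _ = exp (β * √(x + 1)) := by rw [← exp_add, ← mul_add, ← hsplit]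
  have hhalf : β / 2 ≤ β - (√x)⁻¹ := by
    have : (√x)⁻¹ ≤ (2 / β)⁻¹ := inv_anti₀ (by positivity) hβr
    rw [inv_div] at this
    linarith
  have hquarter : (4 * x)⁻¹ ≤ (√(x + 1) - √x) / √(x + 1) := calc
    (4 * x)⁻¹ ≤ (2 * (x + 1))⁻¹ := inv_anti₀ (by linarith) (by linarith)
    _ = (2 * √(x + 1))⁻¹ / √(x + 1) := by
      rw [div_eq_mul_inv, ← mul_inv, mul_assoc, mul_self_sqrt (by linarith)]
    _ ≤ _ := by gcongr
  calc exp (β * √x) / x = 8 / β * (exp (β * √x) * ((4 * x)⁻¹ * (β / 2))) := by field_simp; ring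
    _ ≤ 8 / β * (exp (β * √x) * ((√(x + 1) - √x) / √(x + 1) * (β - (√x)⁻¹))) := by
      gcongr
      exact (by positivity : 0 ≤ (4 * x)⁻¹).trans hquarter
    _ = 8 / β * (exp (β * √x) * (1 + β * (√(x + 1) - √x)) / √(x + 1) - exp (β * √x) / √x) := by
      field_simp
      ring
    _ ≤ _ := by gcongr

lemma isBigO_sum_range_sub_exp_mul_sqrt {P : ℕ → ℝ} {A β : ℝ} (hβ : 0 < β)
    (hP : (fun n : ℕ => P n - A * (exp (β * √n) / √n)) =O[atTop] fun n : ℕ => exp (β * √n) / n) :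
    (fun n : ℕ => ∑ k ∈ Finset.range n, P k - 2 * A / β * exp (β * √n)) =O[atTop]
      fun n : ℕ => exp (β * √n) / √n := by
  have hincr := eventually_exp_mul_sqrt_div_le_succ_sub hβ
  refine isBigO_of_isBigO_succ_sub ?_ ?_ ?_
  · have hG : (fun n : ℕ => exp (β * √n) / n) =O[atTop] fun n : ℕ =>
        exp (β * √(n + 1 : ℕ)) / √(n + 1 : ℕ) - exp (β * √n) / √n := by
      refine IsBigO.of_bound (8 / β) ?_
      filter_upwards [hincr] with n hn
      rw [norm_of_nonneg (by positivity), norm_eq_abs, Nat.cast_succ]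
      exact hn.trans (by gcongr; exact le_abs_self _)
    refine ((hP.sub ((isBigO_exp_mul_sqrt_succ_sub β).const_mul_left (2 * A / β))).trans
      hG).congr_left fun n => ?_
    rw [Finset.sum_range_succ, Nat.cast_succ]
    field_simp
    ring
  · filter_upwards [hincr] with n hn
    have h8β : 0 < 8 / β := by positivity
    rw [Nat.cast_succ, ← sub_nonneg]
    exact nonneg_of_mul_nonneg_right ((by positivity : 0 ≤ exp (β * √n) / n).trans hn) h8β
  · filter_upwards [eventually_gt_atTop 0] with n hn
    positivity

end Summation

section IndexShift

lemma isBigO_inv_sqrt_natCast_inv_sqrt_succ :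
    (fun n : ℕ => (√n)⁻¹) =O[atTop] fun n : ℕ => (√(n + 1 : ℕ))⁻¹ := by
  refine IsBigO.of_bound √2 ?_
  filter_upwards [eventually_ge_atTop 1] with n hn
  have hn1 : (1 : ℝ) ≤ n := mod_cast hn
  rw [norm_of_nonneg (by positivity), norm_of_nonneg (by positivity), Nat.cast_succ,
    ← div_eq_mul_inv, ← sqrt_div zero_le_two, ← sqrt_inv]
  refine sqrt_le_sqrt ?_
  rw [inv_le_iff_one_le_mul₀ (by linarith), div_mul_eq_mul_div, one_le_div (by linarith)]
  linarith

lemma isBigO_sqrt_natCast_succ_sub :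
    (fun n : ℕ => √(n + 1 : ℕ) - √n) =O[atTop] fun n : ℕ => (√n)⁻¹ := by
  refine IsBigO.of_bound 1 ?_
  filter_upwards [eventually_gt_atTop 0] with n hn
  have hn0 : (0 : ℝ) < n := mod_cast hn
  rw [Nat.cast_succ, norm_of_nonneg (sub_nonneg.2 (sqrt_le_sqrt (by linarith))),
    norm_of_nonneg (by positivity), one_mul]
  exact (sqrt_add_one_sub_sqrt_le hn0).trans
    (inv_anti₀ (by positivity) (by linarith [sqrt_nonneg (n : ℝ)]))

lemma isBigO_log_natCast_add_sub_log (a : ℝ) :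
    (fun n : ℕ => log (n + a) - log n) =O[atTop] fun n : ℕ => (√n)⁻¹ :=
  ((isBigO_log_add_const_sub_log a).comp_tendsto tendsto_natCast_atTop_atTop).trans
    isBigO_inv_natCast_inv_sqrt

end IndexShift

section Peakon

variable {γ α : ℝ}

lemma isBigO_lagOrth_zero_sq_sub (hγ : -1 < γ) (hα : 0 < α) :
    (fun n : ℕ => lagOrth γ α n 0 ^ 2 -
      lagOrthAmplitude γ α * (exp (4 * √α * √n) / √n)) =O[atTop]
        fun n : ℕ => exp (4 * √α * √n) / n := by
  have hA := lagOrthAmplitude_pos hγ hα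
  have hlog : (fun n : ℕ => log (lagOrth γ α n 0 ^ 2) -
      log (lagOrthAmplitude γ α * (exp (4 * √α * √n) / √n))) =O[atTop]
        fun n : ℕ => (√n)⁻¹ := by
    refine ((isBigO_log_abs_lagOrth_zero_sub hγ hα).const_mul_left 2).congr' ?_ .rfl
    filter_upwards [eventually_gt_atTop 0] with n hn
    rw [log_mul hA.ne' (by positivity), log_div (exp_ne_zero _) (by positivity), log_exp,
      log_sqrt n.cast_nonneg, log_pow, log_abs]
    push_cast
    ring
  refine ((isBigO_log_sub_log_iff (.of_forall fun n => sq_pos_iff.2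
    (lagOrth_zero_ne_zero hγ hα n)) ?_ tendsto_inv_sqrt_natCast).1 hlog).trans
    (IsBigO.of_bound (lagOrthAmplitude γ α) (.of_forall fun n => le_of_eq ?_))
  · filter_upwards [eventually_gt_atTop 0] with n hn
    positivity
  · rw [norm_of_nonneg (by positivity), norm_of_nonneg (by positivity), mul_assoc,
      ← div_eq_mul_inv, div_div, mul_self_sqrt n.cast_nonneg]

lemma two_mul_lagOrthAmplitude_div (γ : ℝ) (hα : 0 < α) :
    2 * lagOrthAmplitude γ α / (4 * √α) =
      Gamma (γ + 1) / (8 * π * α ^ (γ + 1) * exp α) := by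
  have hpow : α ^ (γ + 1) = α ^ (γ + 1 / 2) * √α := by
    rw [sqrt_eq_rpow, ← rpow_add hα]
    ring_nf
  rw [lagOrthAmplitude, hpow]
  field_simp
  ring

lemma sum_lagOrth_zero_sq_pos (hγ : -1 < γ) (hα : 0 < α) {n : ℕ} (hn : 0 < n) :
    0 < ∑ k ∈ Finset.range n, lagOrth γ α k 0 ^ 2 :=
  Finset.sum_pos (fun k _ => sq_pos_iff.2 (lagOrth_zero_ne_zero hγ hα k))
    (Finset.nonempty_range_iff.2 hn.ne')

lemma isBigO_log_sum_lagOrth_zero_sq_sub (hγ : -1 < γ) (hα : 0 < α) :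
    (fun n : ℕ => log (∑ k ∈ Finset.range n, lagOrth γ α k 0 ^ 2) -
      (4 * √(α * n) + log (Gamma (γ + 1) / (8 * π * α ^ (γ + 1) * exp α)))) =O[atTop]
        fun n : ℕ => (√n)⁻¹ := by
  have hsum := isBigO_sum_range_sub_exp_mul_sqrt (by positivity) (isBigO_lagOrth_zero_sq_sub hγ hα)
  rw [two_mul_lagOrthAmplitude_div γ hα] at hsum
  have hC : 0 < Gamma (γ + 1) / (8 * π * α ^ (γ + 1) * exp α) :=
    div_pos (Gamma_pos_of_pos (by linarith)) (by positivity)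
  set C := Gamma (γ + 1) / (8 * π * α ^ (γ + 1) * exp α)
  refine ((isBigO_log_sub_log_iff ?_ (.of_forall fun n => mul_pos hC (exp_pos _))
    tendsto_inv_sqrt_natCast).2 (hsum.trans ?_)).congr_left fun n => ?_
  · filter_upwards [eventually_gt_atTop 0] with n hn
    exact sum_lagOrth_zero_sq_pos hγ hα hn
  · simp only [div_eq_mul_inv, mul_assoc C]
    exact (isBigO_refl _ _).const_mul_right hC.ne'
  · rw [log_mul hC.ne' (exp_ne_zero _), log_exp, sqrt_mul hα.le]
    ring

lemma isBigO_log_abs_lagOrth_pred_zero_sub (hγ : -1 < γ) (hα : 0 < α) :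
    (fun n : ℕ => log |lagOrth γ α (n - 1) 0| - (2 * √α * √n - log n / 4 +
      log (lagOrthAmplitude γ α) / 2)) =O[atTop] fun n : ℕ => (√n)⁻¹ := by
  have hsucc : (fun n : ℕ => log |lagOrth γ α n 0| - (2 * √α * √(n + 1 : ℕ) -
      log (n + 1 : ℕ) / 4 + log (lagOrthAmplitude γ α) / 2)) =O[atTop] fun n : ℕ => (√n)⁻¹ := by
    refine (((isBigO_log_abs_lagOrth_zero_sub hγ hα).sub
      (isBigO_sqrt_natCast_succ_sub.const_mul_left (2 * √α))).add
      ((isBigO_log_natCast_add_sub_log 1).const_mul_left (1 / 4))).congr_left fun n => ?_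
    rw [Nat.cast_succ]
    ring
  have hpred : ∀ᶠ n : ℕ in atTop, n - 1 + 1 = n := by
    filter_upwards [eventually_ge_atTop 1] with n hn
    exact Nat.sub_add_cancel hn
  refine ((hsucc.trans isBigO_inv_sqrt_natCast_inv_sqrt_succ).comp_tendsto
    (tendsto_sub_atTop_nat 1)).congr' ?_ ?_ <;>
  · filter_upwards [hpred] with n hn
    simp only [Function.comp_apply, hn]

/-- The weight `ω_n` of the `n`-th Laguerre peakon. -/
noncomputable def peakonWeight (γ α : ℝ) (n : ℕ) : ℝ :=
  -(∑ k ∈ Finset.range n, lagOrth γ α k 0 ^ 2) /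
    (√(n * (n + γ)) * lagOrth γ α (n - 1) 0 * lagOrth γ α n 0)

lemma peakonWeight_eq (hγ : -1 < γ) (hα : 0 < α) {n : ℕ} (hn : 0 < n) :
    peakonWeight γ α n = (∑ k ∈ Finset.range n, lagOrth γ α k 0 ^ 2) /
      (√(n * (n + γ)) * (|lagOrth γ α (n - 1) 0| * |lagOrth γ α n 0|)) := by
  have hsign := lagOrth_zero_mul_lagOrth_succ_zero hγ hα (n - 1)
  rw [Nat.sub_add_cancel hn] at hsign
  rw [peakonWeight, mul_assoc, hsign, mul_neg, neg_div_neg_eq]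

lemma natCast_mul_add_pos (hγ : -1 < γ) {n : ℕ} (hn : 0 < n) : 0 < (n : ℝ) * (n + γ) := by
  have hn1 : (1 : ℝ) ≤ n := mod_cast hn
  exact mul_pos (by linarith) (by linarith)

lemma peakonWeight_pos (hγ : -1 < γ) (hα : 0 < α) {n : ℕ} (hn : 0 < n) :
    0 < peakonWeight γ α n := by
  rw [peakonWeight_eq hγ hα hn]
  exact div_pos (sum_lagOrth_zero_sq_pos hγ hα hn) (mul_pos (sqrt_pos.2 (natCast_mul_add_pos hγ hn))
    (mul_pos (abs_pos.2 (lagOrth_zero_ne_zero hγ hα _)) (abs_pos.2 (lagOrth_zero_ne_zero hγ hα _))))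

lemma log_peakonWeight (hγ : -1 < γ) (hα : 0 < α) {n : ℕ} (hn : 0 < n) :
    log (peakonWeight γ α n) = log (∑ k ∈ Finset.range n, lagOrth γ α k 0 ^ 2) -
      ((log n + log (n + γ)) / 2 + (log |lagOrth γ α (n - 1) 0| + log |lagOrth γ α n 0|)) := by
  have hmul := natCast_mul_add_pos hγ hn
  have hpred := abs_ne_zero.2 (lagOrth_zero_ne_zero hγ hα (n - 1))
  have hcurr := abs_ne_zero.2 (lagOrth_zero_ne_zero hγ hα n)
  rw [peakonWeight_eq hγ hα hn, log_div (sum_lagOrth_zero_sq_pos hγ hα hn).ne'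
    (mul_ne_zero (sqrt_pos.2 hmul).ne' (mul_ne_zero hpred hcurr)),
    log_mul (sqrt_pos.2 hmul).ne' (mul_ne_zero hpred hcurr), log_sqrt hmul.le,
    log_mul (left_ne_zero_of_mul hmul.ne') (right_ne_zero_of_mul hmul.ne'), log_mul hpred hcurr]

lemma isBigO_log_peakonWeight_sub (hγ : -1 < γ) (hα : 0 < α) :
    (fun n : ℕ => log (peakonWeight γ α n) - log (1 / (2 * √(α * n)))) =O[atTop]
      fun n : ℕ => (√n)⁻¹ := by
  refine ((((isBigO_log_sum_lagOrth_zero_sq_sub hγ hα).sub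
    ((isBigO_log_natCast_add_sub_log γ).const_mul_left (1 / 2))).sub
    (isBigO_log_abs_lagOrth_pred_zero_sub hγ hα)).sub
    (isBigO_log_abs_lagOrth_zero_sub hγ hα)).congr' ?_ .rfl
  filter_upwards [eventually_gt_atTop 0] with n hn
  have hn0 : (0 : ℝ) < n := mod_cast hn
  rw [log_peakonWeight hγ hα hn, ← two_mul_lagOrthAmplitude_div γ hα, sqrt_mul hα.le,
    log_div (mul_pos two_pos (lagOrthAmplitude_pos hγ hα)).ne' (by positivity),
    log_mul two_ne_zero (lagOrthAmplitude_pos hγ hα).ne', show (4 : ℝ) = 2 * 2 by norm_num,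
    log_mul (by positivity) (by positivity), log_mul two_ne_zero two_ne_zero,
    log_div one_ne_zero (by positivity), log_one, log_mul two_ne_zero (by positivity),
    log_mul (by positivity) (by positivity), log_sqrt hn0.le]
  ring

lemma isBigO_peakonWeight_sub (hγ : -1 < γ) (hα : 0 < α) :
    (fun n : ℕ => peakonWeight γ α n - 1 / (2 * √(α * n))) =O[atTop]
      fun n : ℕ => 1 / (n : ℝ) := by
  have hpos : ∀ᶠ n : ℕ in atTop, 0 < n := eventually_gt_atTop 0
  refine ((isBigO_log_sub_log_iff (hpos.mono fun n hn => peakonWeight_pos hγ hα hn)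
    (hpos.mono fun n hn => by positivity) tendsto_inv_sqrt_natCast).1
    (isBigO_log_peakonWeight_sub hγ hα)).trans
    (IsBigO.of_bound (2 * √α)⁻¹ (.of_forall fun n => le_of_eq ?_))
  rw [norm_of_nonneg (by positivity), norm_of_nonneg (by positivity), sqrt_mul hα.le, ← mul_assoc,
    one_div, mul_inv, mul_assoc, ← mul_inv, mul_self_sqrt n.cast_nonneg, one_div]

end Peakon

end

/-- Asymptotics of the Laguerre peakon data: with
`e^{x_n} = ∑_{k=0}^{n-1} P_k(0)²` and `ω_n = -(∑_{k=0}^{n-1} P_k(0)²)/(b_{n-1} P_{n-1}(0) P_n(0))`,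
where `b_{n-1} = √(n(n+γ))`, one has, as `n → ∞`,
`x_n = 4√(αn) + log (Γ(γ+1)/(8π α^{γ+1} e^α)) + O(n^{-1/2})` and
`ω_n = 1/(2√(αn)) + O(1/n)`. -/
theorem stmt17 (γ α : ℝ) (hγ : -1 < γ) (hα : 0 < α)
    (x ω : ℕ → ℝ)
    (hx : ∀ n : ℕ, x n = Real.log (∑ k ∈ Finset.range n, (lagOrth γ α k 0) ^ 2))
    (hω : ∀ n : ℕ, ω n = -(∑ k ∈ Finset.range n, (lagOrth γ α k 0) ^ 2) /
      (Real.sqrt ((n : ℝ) * ((n : ℝ) + γ)) * lagOrth γ α (n - 1) 0 * lagOrth γ α n 0)) :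
    (fun n : ℕ => x n -
        (4 * Real.sqrt (α * n) +
          Real.log (Real.Gamma (γ + 1) / (8 * Real.pi * α ^ (γ + 1) * Real.exp α))))
      =O[atTop] (fun n : ℕ => ((n : ℝ)) ^ (-(1 : ℝ) / 2)) ∧
    (fun n : ℕ => ω n - 1 / (2 * Real.sqrt (α * n))) =O[atTop] (fun n : ℕ => 1 / (n : ℝ)) := by
  obtain rfl : ω = peakonWeight γ α := funext hω
  refine ⟨?_, isBigO_peakonWeight_sub hγ hα⟩
  simp only [hx, Real.rpow_div_two_eq_sqrt _ (Nat.cast_nonneg _), Real.rpow_neg_one]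
  exact isBigO_log_sum_lagOrth_zero_sq_sub hγ hα
end

section
/- Let x_n = 4√(αn) + c + O(n^{−ε}) and ω_n = (1/(2√(αn)))(1 + O(n^{−ε})) with ε > 1/3, α > 0, c ∈ ℝ, ω_n > 0, x_n strictly increasing. Then ∑_{n≥1} (1 − e^{x_{n−1}−x_n})³ < ∞ and ∑_{n≥1} (1 − e^{x_{n−1}−x_n}) (e^{x_n} ∑_{k≥n} ω_k e^{−x_k} − 1/(4α))² < ∞. -/
/-!
Replacing `x n` and `ω n` by `s n = 4√(αn) + c` and `w n = 1 / (2√(αn))` multiplies each of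
`exp (x n)` and `ω k * exp (-x k)` by a factor `1 + O(n ^ (-δ))`, where `δ = min ε (1 / 2) > 1 / 3`.
For the model data, `w` interlaces with the increments of `s / (4α)`, and comparison of exponentials
with their tangent lines sandwiches `∑_{k ≥ n} w k * exp (-s k)` between `exp (-s n) / (4α)`, a
telescoping sum, and the same quantity plus its first term `w n * exp (-s n)`. So the scaled tails
are `1 / (4α) + O(n ^ (-δ))`, the gaps of `x` are `O(n ^ (-δ))`, and the terms of both series are
`O(n ^ (-3δ))`.
-/

open Filter Asymptotics Topology

section Asymptotics

variable {ι : Type*} {l : Filter ι}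

lemma isBigO_of_forall_abs_le_mul {f g : ℕ → ℝ} {N : ℕ} {C : ℝ}
    (h : ∀ n, N ≤ n → |f n| ≤ C * g n) : f =O[atTop] g := by
  refine IsBigO.trans (.of_bound' ?_) (isBigO_const_mul_self C g atTop)
  filter_upwards [eventually_ge_atTop N] with n hn
  exact (h n hn).trans (le_abs_self _)

lemma isBigO_mul_sub_mul {R : Type*} [NormedRing R] {f g : ι → R} {a b : R} {r : ι → ℝ}
    (hf : (fun i ↦ f i - a) =O[l] r) (hg : (fun i ↦ g i - b) =O[l] r)
    (hr : r =O[l] (1 : ι → ℝ)) : (fun i ↦ f i * g i - a * b) =O[l] r := by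
  have hg_bdd : g =O[l] (1 : ι → ℝ) := by
    simpa using (hg.trans hr).add (isBigO_const_one ℝ b l)
  have hfg : (fun i ↦ (f i - a) * g i) =O[l] r := by
    simpa using hf.mul hg_bdd
  exact (hfg.add (hg.const_mul_left a)).congr_left fun i ↦ by noncomm_ring

lemma isBigO_exp_sub_one_s19 {u r : ι → ℝ} (hu : u =O[l] r) (hr : Tendsto r l (𝓝 0)) :
    (fun i ↦ Real.exp (u i) - 1) =O[l] r := by
  have hexp : (fun t ↦ Real.exp t - 1) =O[𝓝 0] fun t ↦ t := by
    simpa using (Real.hasDerivAt_exp 0).isBigO_sub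
  exact (hexp.comp_tendsto (hu.trans_tendsto hr)).trans hu

lemma isBigO_tsum_nat_add {E : Type*} [NormedAddCommGroup E] {f : ℕ → E} {b r : ℕ → ℝ} {N : ℕ}
    (hf : f =O[atTop] fun k ↦ r k * b k) (hb : ∀ᶠ k in atTop, 0 ≤ b k) (hb_sum : Summable b)
    (hr_nonneg : ∀ k, 0 ≤ r k) (hr : AntitoneOn r (Set.Ici N)) :
    (fun n ↦ ∑' k, f (k + n)) =O[atTop] fun n ↦ r n * ∑' k, b (k + n) := by
  obtain ⟨C, hC, hfC⟩ := hf.exists_nonneg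
  refine .of_bound C ?_
  filter_upwards [eventually_ge_atTop N, eventually_forall_ge_atTop.2 hfC.bound,
    eventually_forall_ge_atTop.2 hb] with n hn hfn hbn
  have hterm (k : ℕ) : ‖f (k + n)‖ ≤ C * (r n * b (k + n)) := by
    have hnk : n ≤ k + n := Nat.le_add_left n k
    calc ‖f (k + n)‖ ≤ C * (r (k + n) * b (k + n)) := by
          simpa only [norm_mul, Real.norm_of_nonneg (hr_nonneg _), Real.norm_of_nonneg (hbn _ hnk)]
            using hfn _ hnk
      _ ≤ C * (r n * b (k + n)) := by
          gcongr
          exacts [hbn _ hnk, hr hn (hn.trans hnk) hnk]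
  have hsum : HasSum (fun k ↦ C * (r n * b (k + n))) (C * (r n * ∑' k, b (k + n))) :=
    (((summable_nat_add_iff n).2 hb_sum).hasSum.mul_left _).mul_left _
  exact (tsum_of_norm_bounded hsum hterm).trans (by gcongr; exact le_abs_self _)

end Asymptotics

section PowerRate

variable {p q : ℝ}

lemma isBigO_natCast_rpow_rpow (hpq : p ≤ q) :
    (fun n : ℕ ↦ (n : ℝ) ^ p) =O[atTop] fun n : ℕ ↦ (n : ℝ) ^ q := by
  refine isBigO_of_forall_abs_le_mul (N := 1) (C := 1) fun n hn ↦ ?_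
  rw [one_mul, abs_of_nonneg (by positivity)]
  exact Real.rpow_le_rpow_of_exponent_le (mod_cast hn) hpq

lemma antitoneOn_natCast_rpow (hp : p ≤ 0) :
    AntitoneOn (fun n : ℕ ↦ (n : ℝ) ^ p) (Set.Ici 1) := fun _ hm _ _ hmn ↦
  Real.rpow_le_rpow_of_nonpos (Nat.cast_pos.2 hm) (Nat.cast_le.2 hmn) hp

lemma isBigO_natCast_succ_rpow (hp : p ≤ 0) :
    (fun n : ℕ ↦ ((n + 1 : ℕ) : ℝ) ^ p) =O[atTop] fun n : ℕ ↦ (n : ℝ) ^ p := by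
  refine isBigO_of_forall_abs_le_mul (N := 1) (C := 1) fun n hn ↦ ?_
  rw [one_mul, abs_of_nonneg (by positivity)]
  exact antitoneOn_natCast_rpow hp hn (Nat.le_succ_of_le hn) n.le_succ

lemma summable_natCast_rpow_pow {m : ℕ} (hp : p * m < -1) :
    Summable fun n : ℕ ↦ ((n : ℝ) ^ p) ^ m :=
  (Real.summable_nat_rpow.2 hp).congr fun n ↦ Real.rpow_mul_natCast n.cast_nonneg p m

end PowerRate

section Telescoping

lemma tsum_ite_le {M : Type*} [AddCommMonoid M] [TopologicalSpace M] (f : ℕ → M) (n : ℕ) :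
    (∑' k, if n ≤ k then f k else 0) = ∑' k, f (k + n) := by
  have hsupp : (Function.support fun k ↦ if n ≤ k then f k else 0) ⊆ Set.range (· + n) := by
    intro k hk
    have hnk : n ≤ k := by
      by_contra h
      simp [h] at hk
    exact ⟨k - n, Nat.sub_add_cancel hnk⟩
  rw [← (add_left_injective n).tsum_eq hsupp]
  simp

lemma summable_of_interlacing {f d : ℕ → ℝ} (hd : Summable d) (hd_nonneg : ∀ k, 0 ≤ d k)
    (hdf : ∀ k, d k ≤ f k) (hfd : ∀ k, f (k + 1) ≤ d k) : Summable f :=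
  (summable_nat_add_iff 1).1 <|
    .of_nonneg_of_le (fun k ↦ (hd_nonneg (k + 1)).trans (hdf (k + 1))) hfd hd

lemma tsum_mem_Icc_of_interlacing {f d : ℕ → ℝ} (hd : Summable d) (hf : Summable f)
    (hdf : ∀ k, d k ≤ f k) (hfd : ∀ k, f (k + 1) ≤ d k) :
    ∑' k, f k ∈ Set.Icc (∑' k, d k) (∑' k, d k + f 0) := by
  refine ⟨hd.tsum_le_tsum hdf hf, ?_⟩
  rw [hf.tsum_eq_zero_add, add_comm]
  exact add_le_add_left (((summable_nat_add_iff 1).2 hf).tsum_le_tsum hfd hd) (f 0)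

lemma hasSum_exp_neg_sub_exp_neg_succ {s : ℕ → ℝ} (hs : Monotone s)
    (hlim : Tendsto s atTop atTop) (n : ℕ) :
    HasSum (fun k ↦ Real.exp (-s (k + n)) - Real.exp (-s (k + n + 1))) (Real.exp (-s n)) := by
  have hnonneg (k : ℕ) : 0 ≤ Real.exp (-s (k + n)) - Real.exp (-s (k + n + 1)) :=
    sub_nonneg.2 (Real.exp_le_exp.2 (neg_le_neg (hs (k + n).le_succ)))
  have htelescope (m : ℕ) :
      ∑ k ∈ Finset.range m, (Real.exp (-s (k + n)) - Real.exp (-s (k + n + 1))) =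
        Real.exp (-s n) - Real.exp (-s (m + n)) := by
    simpa [add_right_comm] using Finset.sum_range_sub' (fun k ↦ Real.exp (-s (k + n))) m
  rw [hasSum_iff_tendsto_nat_of_nonneg hnonneg]
  simp_rw [htelescope]
  simpa using (Real.tendsto_exp_neg_atTop_nhds_zero.comp
    (hlim.comp (tendsto_add_atTop_nat n))).const_sub (Real.exp (-s n))

lemma exp_neg_sub_exp_neg_le (a b : ℝ) :
    Real.exp (-a) - Real.exp (-b) ≤ Real.exp (-a) * (b - a) := by
  have hsplit : Real.exp (-b) = Real.exp (-a) * Real.exp (a - b) := by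
    rw [← Real.exp_add]
    ring_nf
  rw [hsplit]
  nlinarith [Real.add_one_le_exp (a - b), Real.exp_pos (-a)]

lemma sqrt_sub_sqrt_le {a b : ℝ} (ha : 0 < a) (hb : 0 ≤ b) : √b - √a ≤ (b - a) / (2 * √a) := by
  rw [le_div_iff₀ (by positivity)]
  nlinarith [sq_nonneg (√b - √a), Real.sq_sqrt ha.le, Real.sq_sqrt hb]

end Telescoping

/-- The scaled tail `e^{x_n} ∑_{k ≥ n} ω_k e^{-x_k}` of peakon data with positions `x` and
weights `ω`, with the sum reindexed to start at `0`. For increasing `x` it is the left limit of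
`u + u'` at `x_n`, where `u` is the peakon profile. -/
noncomputable def scaledTail (x ω : ℕ → ℝ) (n : ℕ) : ℝ :=
  Real.exp (x n) * ∑' k, ω (k + n) * Real.exp (-x (k + n))

section Interlacing

variable {s w : ℕ → ℝ} {L : ℝ} {n : ℕ}

lemma mul_exp_neg_sub_le_mul_exp_neg (hL : 0 ≤ L) (h : L * (s (n + 1) - s n) ≤ w n) :
    L * (Real.exp (-s n) - Real.exp (-s (n + 1))) ≤ w n * Real.exp (-s n) :=
  calc L * (Real.exp (-s n) - Real.exp (-s (n + 1)))
      ≤ L * (Real.exp (-s n) * (s (n + 1) - s n)) := by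
        gcongr
        exact exp_neg_sub_exp_neg_le _ _
    _ = L * (s (n + 1) - s n) * Real.exp (-s n) := by ring
    _ ≤ w n * Real.exp (-s n) := by gcongr

lemma mul_exp_neg_succ_le_mul_exp_neg_sub (hL : 0 ≤ L) (h : w (n + 1) ≤ L * (s (n + 1) - s n)) :
    w (n + 1) * Real.exp (-s (n + 1)) ≤ L * (Real.exp (-s n) - Real.exp (-s (n + 1))) :=
  calc w (n + 1) * Real.exp (-s (n + 1))
      ≤ L * (s (n + 1) - s n) * Real.exp (-s (n + 1)) := by gcongr
    _ = L * -(Real.exp (-s (n + 1)) * (s n - s (n + 1))) := by ring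
    _ ≤ L * (Real.exp (-s n) - Real.exp (-s (n + 1))) := by
        gcongr
        linarith [exp_neg_sub_exp_neg_le (s (n + 1)) (s n)]

lemma summable_mul_exp_neg_of_interlacing (hs : Monotone s) (hlim : Tendsto s atTop atTop)
    (hL : 0 ≤ L) (hle : ∀ k, n ≤ k → L * (s (k + 1) - s k) ≤ w k)
    (hge : ∀ k, n ≤ k → w (k + 1) ≤ L * (s (k + 1) - s k)) :
    Summable fun k ↦ w k * Real.exp (-s k) := by
  refine (summable_nat_add_iff n).1 <| summable_of_interlacing
    ((hasSum_exp_neg_sub_exp_neg_succ hs hlim n).summable.mul_left L) (fun k ↦ ?_)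
    (fun k ↦ mul_exp_neg_sub_le_mul_exp_neg hL (hle _ (Nat.le_add_left n k))) fun k ↦ ?_
  · exact mul_nonneg hL (sub_nonneg.2 (Real.exp_le_exp.2 (neg_le_neg (hs (k + n).le_succ))))
  · rw [add_right_comm]
    exact mul_exp_neg_succ_le_mul_exp_neg_sub hL (hge _ (Nat.le_add_left n k))

lemma scaledTail_mem_Icc_of_interlacing (hs : Monotone s) (hlim : Tendsto s atTop atTop)
    (hL : 0 ≤ L) (hle : ∀ k, n ≤ k → L * (s (k + 1) - s k) ≤ w k)
    (hge : ∀ k, n ≤ k → w (k + 1) ≤ L * (s (k + 1) - s k)) :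
    scaledTail s w n ∈ Set.Icc L (L + w n) := by
  have htelescope := (hasSum_exp_neg_sub_exp_neg_succ hs hlim n).mul_left L
  have hsum := summable_mul_exp_neg_of_interlacing hs hlim hL hle hge
  obtain ⟨hlower, hupper⟩ := tsum_mem_Icc_of_interlacing htelescope.summable
    ((summable_nat_add_iff n).2 hsum)
    (fun k ↦ mul_exp_neg_sub_le_mul_exp_neg hL (hle _ (Nat.le_add_left n k)))
    (fun k ↦ by
      rw [add_right_comm]
      exact mul_exp_neg_succ_le_mul_exp_neg_sub hL (hge _ (Nat.le_add_left n k)))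
  rw [htelescope.tsum_eq] at hlower hupper
  rw [zero_add, ← add_mul] at hupper
  rw [scaledTail, mul_comm]
  constructor
  · rwa [← div_le_iff₀ (Real.exp_pos _), div_eq_mul_inv, ← Real.exp_neg]
  · rwa [← le_div_iff₀ (Real.exp_pos _), div_eq_mul_inv, ← Real.exp_neg]

end Interlacing

section Perturbation

variable {x s ω w r : ℕ → ℝ} {L : ℝ} {N : ℕ}

lemma isBigO_mul_exp_neg_sub (hx : (fun n ↦ x n - s n) =O[atTop] r)
    (hω : (fun n ↦ ω n / w n - 1) =O[atTop] r) (hw : ∀ᶠ n in atTop, 0 < w n)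
    (hr : Tendsto r atTop (𝓝 0)) :
    (fun n ↦ ω n * Real.exp (-x n) - w n * Real.exp (-s n)) =O[atTop]
      fun n ↦ r n * (w n * Real.exp (-s n)) := by
  have hexp : (fun n ↦ Real.exp (s n - x n) - 1) =O[atTop] r :=
    isBigO_exp_sub_one_s19 (by simpa using hx.neg_left) hr
  have hratio := isBigO_mul_sub_mul hω hexp (hr.isBigO_one ℝ)
  refine (hratio.mul (isBigO_refl (fun n ↦ w n * Real.exp (-s n)) atTop)).congr' ?_ .rfl
  filter_upwards [hw] with n hn
  have hsplit : Real.exp (-x n) = Real.exp (s n - x n) * Real.exp (-s n) := by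
    rw [← Real.exp_add]
    ring_nf
  rw [hsplit]
  field_simp

lemma isBigO_scaledTail_sub (hx : (fun n ↦ x n - s n) =O[atTop] r)
    (hω : (fun n ↦ ω n / w n - 1) =O[atTop] r) (hw : ∀ᶠ n in atTop, 0 < w n)
    (hsum : Summable fun k ↦ w k * Real.exp (-s k))
    (hr_nonneg : ∀ n, 0 ≤ r n) (hr_anti : AntitoneOn r (Set.Ici N)) (hr : Tendsto r atTop (𝓝 0))
    (hmodel : (fun n ↦ scaledTail s w n - L) =O[atTop] r) :
    (fun n ↦ scaledTail x ω n - L) =O[atTop] r := by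
  have hr_bdd : r =O[atTop] (1 : ℕ → ℝ) := hr.isBigO_one ℝ
  have hmodel_bdd : scaledTail s w =O[atTop] (1 : ℕ → ℝ) := by
    simpa using (hmodel.trans hr_bdd).add (isBigO_const_one ℝ L atTop)
  have hterm := isBigO_mul_exp_neg_sub hx hω hw hr
  have hsum' : Summable fun k ↦ ω k * Real.exp (-x k) := by
    have hdiff := summable_of_isBigO_nat hsum
      (hterm.trans (by simpa using hr_bdd.mul (isBigO_refl (fun k ↦ w k * Real.exp (-s k)) atTop)))
    simpa using hdiff.add hsum
  have htail : (fun n ↦ Real.exp (s n) * ∑' k, ω (k + n) * Real.exp (-x (k + n)) -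
      scaledTail s w n) =O[atTop] r := by
    have hdiff := isBigO_tsum_nat_add hterm (hw.mono fun n hn ↦ by positivity) hsum
      hr_nonneg hr_anti
    have hscaled := (isBigO_refl (fun n ↦ Real.exp (s n)) atTop).mul hdiff
    have hrate : (fun n ↦ r n * scaledTail s w n) =O[atTop] r := by
      simpa using (isBigO_refl r atTop).mul hmodel_bdd
    refine (hscaled.congr (fun n ↦ ?_) fun n ↦ mul_left_comm _ _ _).trans hrate
    rw [((summable_nat_add_iff n).2 hsum').tsum_sub ((summable_nat_add_iff n).2 hsum), mul_sub]
    rfl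
  have hfactor := isBigO_mul_sub_mul (isBigO_exp_sub_one_s19 hx hr)
    ((htail.add hmodel).congr_left fun n ↦ sub_add_sub_cancel _ _ _) hr_bdd
  refine hfactor.congr_left fun n ↦ ?_
  rw [one_mul, ← mul_assoc, ← Real.exp_add, sub_add_cancel, scaledTail]

lemma isBigO_one_sub_exp_sub_succ (hx : (fun n ↦ x n - s n) =O[atTop] r)
    (hs : (fun n ↦ s (n + 1) - s n) =O[atTop] r) (hr_succ : (fun n ↦ r (n + 1)) =O[atTop] r)
    (hr : Tendsto r atTop (𝓝 0)) :
    (fun n ↦ 1 - Real.exp (x n - x (n + 1))) =O[atTop] r := by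
  have hx_succ : (fun n ↦ x (n + 1) - s (n + 1)) =O[atTop] r :=
    (hx.comp_tendsto (tendsto_add_atTop_nat 1)).trans hr_succ
  have hgap : (fun n ↦ x n - x (n + 1)) =O[atTop] r :=
    ((hx.sub hx_succ).sub hs).congr_left fun n ↦ by ring
  simpa using (isBigO_exp_sub_one_s19 hgap hr).neg_left

end Perturbation

/-- The model positions `4√(αn) + c`. -/
noncomputable def laguerreNode (α c : ℝ) (n : ℕ) : ℝ := 4 * √(α * n) + c

/-- The model weights `1 / (2√(αn))`. The value at `n = 0` is the junk value `0`. -/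
noncomputable def laguerreWeight (α : ℝ) (n : ℕ) : ℝ := (2 * √(α * n))⁻¹

section Laguerre

variable {α : ℝ} {n : ℕ}

lemma monotone_laguerreNode (hα : 0 ≤ α) (c : ℝ) : Monotone (laguerreNode α c) := by
  intro m n hmn
  unfold laguerreNode
  gcongr

lemma tendsto_laguerreNode_atTop (hα : 0 < α) (c : ℝ) :
    Tendsto (laguerreNode α c) atTop atTop :=
  tendsto_atTop_add_const_right _ _ <| .const_mul_atTop (by norm_num) <|
    Real.tendsto_sqrt_atTop.comp <| tendsto_natCast_atTop_atTop.const_mul_atTop hα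

lemma laguerreWeight_pos (hα : 0 < α) (hn : 1 ≤ n) : 0 < laguerreWeight α n := by
  unfold laguerreWeight
  positivity

lemma isBigO_laguerreWeight (hα : 0 ≤ α) :
    laguerreWeight α =O[atTop] fun n : ℕ ↦ (n : ℝ) ^ (-(1 / 2) : ℝ) := by
  refine (isBigO_const_mul_self (2 * √α)⁻¹ _ atTop).congr_left fun n ↦ ?_
  rw [laguerreWeight, Real.rpow_neg n.cast_nonneg, ← Real.sqrt_eq_rpow, Real.sqrt_mul hα,
    ← mul_assoc, mul_inv _ √(n : ℝ)]

lemma laguerreNode_succ_sub_le (hα : 0 < α) (c : ℝ) (hn : 1 ≤ n) :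
    1 / (4 * α) * (laguerreNode α c (n + 1) - laguerreNode α c n) ≤ laguerreWeight α n := by
  have hαn : 0 < α * n := by positivity
  calc 1 / (4 * α) * (laguerreNode α c (n + 1) - laguerreNode α c n)
      = (√(α * (n + 1 : ℕ)) - √(α * n)) / α := by
        unfold laguerreNode
        field_simp
        ring
    _ ≤ (α * (n + 1 : ℕ) - α * n) / (2 * √(α * n)) / α := by
        gcongr
        exact sqrt_sub_sqrt_le hαn (by positivity)
    _ = laguerreWeight α n := by
        unfold laguerreWeight
        push_cast
        field_simp
        ring

lemma laguerreWeight_succ_le (hα : 0 < α) (c : ℝ) (n : ℕ) :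
    laguerreWeight α (n + 1) ≤ 1 / (4 * α) * (laguerreNode α c (n + 1) - laguerreNode α c n) := by
  have hαn : 0 < α * (n + 1 : ℕ) := by positivity
  calc laguerreWeight α (n + 1)
      = -((α * n - α * (n + 1 : ℕ)) / (2 * √(α * (n + 1 : ℕ)))) / α := by
        unfold laguerreWeight
        field_simp
        push_cast
        ring
    _ ≤ (√(α * (n + 1 : ℕ)) - √(α * n)) / α := by
        gcongr
        linarith [sqrt_sub_sqrt_le hαn (by positivity : 0 ≤ α * (n : ℝ))]
    _ = 1 / (4 * α) * (laguerreNode α c (n + 1) - laguerreNode α c n) := by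
        unfold laguerreNode
        field_simp
        ring

lemma isBigO_laguerreNode_succ_sub (hα : 0 < α) (c : ℝ) :
    (fun n ↦ laguerreNode α c (n + 1) - laguerreNode α c n) =O[atTop]
      fun n : ℕ ↦ (n : ℝ) ^ (-(1 / 2) : ℝ) := by
  refine IsBigO.trans ?_ (isBigO_laguerreWeight hα.le)
  refine isBigO_of_forall_abs_le_mul (N := 1) (C := 4 * α) fun n hn ↦ ?_
  rw [abs_of_nonneg (sub_nonneg.2 (monotone_laguerreNode hα.le c n.le_succ)),
    ← div_le_iff₀' (by positivity), div_eq_inv_mul, ← one_div]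
  exact laguerreNode_succ_sub_le hα c hn

lemma summable_laguerreWeight_mul_exp_neg (hα : 0 < α) (c : ℝ) :
    Summable fun k ↦ laguerreWeight α k * Real.exp (-laguerreNode α c k) :=
  summable_mul_exp_neg_of_interlacing (monotone_laguerreNode hα.le c)
    (tendsto_laguerreNode_atTop hα c) (by positivity)
    (fun _ hk ↦ laguerreNode_succ_sub_le hα c hk) fun k _ ↦ laguerreWeight_succ_le hα c k

lemma scaledTail_laguerre_mem_Icc (hα : 0 < α) (c : ℝ) (hn : 1 ≤ n) :
    scaledTail (laguerreNode α c) (laguerreWeight α) n ∈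
      Set.Icc (1 / (4 * α)) (1 / (4 * α) + laguerreWeight α n) :=
  scaledTail_mem_Icc_of_interlacing (monotone_laguerreNode hα.le c)
    (tendsto_laguerreNode_atTop hα c) (by positivity)
    (fun _ hk ↦ laguerreNode_succ_sub_le hα c (hn.trans hk))
    fun k _ ↦ laguerreWeight_succ_le hα c k

lemma isBigO_scaledTail_laguerre_sub (hα : 0 < α) (c : ℝ) :
    (fun n ↦ scaledTail (laguerreNode α c) (laguerreWeight α) n - 1 / (4 * α)) =O[atTop]
      fun n : ℕ ↦ (n : ℝ) ^ (-(1 / 2) : ℝ) := by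
  refine IsBigO.trans ?_ (isBigO_laguerreWeight hα.le)
  refine isBigO_of_forall_abs_le_mul (N := 1) (C := 1) fun n hn ↦ ?_
  obtain ⟨hlower, hupper⟩ := scaledTail_laguerre_mem_Icc hα c hn
  rw [abs_of_nonneg (sub_nonneg.2 hlower), one_mul]
  exact sub_le_iff_le_add'.2 hupper

end Laguerre

theorem stmt19_general {α c ε : ℝ} (hα : 0 < α) (hε : 1 / 3 < ε) {x ω : ℕ → ℝ}
    (hx : (fun n : ℕ ↦ x n - (4 * √(α * n) + c)) =O[atTop] fun n : ℕ ↦ (n : ℝ) ^ (-ε))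
    (hω : (fun n : ℕ ↦ ω n * (2 * √(α * n)) - 1) =O[atTop] fun n : ℕ ↦ (n : ℝ) ^ (-ε)) :
    Summable (fun n : ℕ ↦ (1 - Real.exp (x n - x (n + 1))) ^ 3) ∧
    Summable (fun n : ℕ ↦ (1 - Real.exp (x n - x (n + 1))) *
      (Real.exp (x (n + 1)) * (∑' k : ℕ, if n + 1 ≤ k then ω k * Real.exp (-x k) else 0) -
        1 / (4 * α)) ^ 2) := by
  obtain ⟨δ, hδ, hδ_half, hδε⟩ : ∃ δ : ℝ, 1 / 3 < δ ∧ δ ≤ 1 / 2 ∧ δ ≤ ε :=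
    ⟨min ε (1 / 2), lt_min hε (by norm_num), min_le_right _ _, min_le_left _ _⟩
  set r : ℕ → ℝ := fun n ↦ (n : ℝ) ^ (-δ)
  have hr : Tendsto r atTop (𝓝 0) :=
    (tendsto_rpow_neg_atTop (by linarith)).comp tendsto_natCast_atTop_atTop
  have hr_succ : (fun n ↦ r (n + 1)) =O[atTop] r := isBigO_natCast_succ_rpow (by linarith)
  have hr_cube : Summable fun n ↦ r n ^ 3 := summable_natCast_rpow_pow (by norm_num; linarith)
  have hε_rate := isBigO_natCast_rpow_rpow (neg_le_neg hδε)
  have hhalf_rate := isBigO_natCast_rpow_rpow (neg_le_neg hδ_half)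
  have hx_node : (fun n ↦ x n - laguerreNode α c n) =O[atTop] r := hx.trans hε_rate
  have hω_weight : (fun n ↦ ω n / laguerreWeight α n - 1) =O[atTop] r := by
    simpa only [laguerreWeight, div_inv_eq_mul] using hω.trans hε_rate
  have hgap : (fun n ↦ 1 - Real.exp (x n - x (n + 1))) =O[atTop] r :=
    isBigO_one_sub_exp_sub_succ hx_node ((isBigO_laguerreNode_succ_sub hα c).trans hhalf_rate)
      hr_succ hr
  have htail : (fun n ↦ scaledTail x ω n - 1 / (4 * α)) =O[atTop] r :=
    isBigO_scaledTail_sub hx_node hω_weight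
      ((eventually_ge_atTop 1).mono fun _ ↦ laguerreWeight_pos hα)
      (summable_laguerreWeight_mul_exp_neg hα c) (fun _ ↦ by positivity)
      (antitoneOn_natCast_rpow (by linarith)) hr
      ((isBigO_scaledTail_laguerre_sub hα c).trans hhalf_rate)
  have htail_succ := (htail.comp_tendsto (tendsto_add_atTop_nat 1)).trans hr_succ
  refine ⟨summable_of_isBigO_nat hr_cube (hgap.pow 3), ?_⟩
  simp_rw [tsum_ite_le]
  exact summable_of_isBigO_nat hr_cube
    ((hgap.mul (htail_succ.pow 2)).congr_right fun n ↦ (pow_succ' (r n) 2).symm)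


/-- Killip–Simon-type summability conditions for peakon data with Laguerre-type
asymptotics: if `x_n = 4√(αn) + c + O(n^{-ε})` and
`ω_n = (1/(2√(αn)))(1 + O(n^{-ε}))` with `ε > 1/3`, then
`∑ (1 - e^{x_{n-1}-x_n})³ < ∞` and
`∑ (1 - e^{x_{n-1}-x_n}) (e^{x_n} ∑_{k≥n} ω_k e^{-x_k} - 1/(4α))² < ∞`. -/
theorem stmt19 (α c ε : ℝ) (hα : 0 < α) (hε : 1 / 3 < ε)
    (x ω : ℕ → ℝ) (hmono : StrictMono x) (hωpos : ∀ n : ℕ, 1 ≤ n → 0 < ω n)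
    (C : ℝ) (hC : 0 < C)
    (hxasym : ∀ n : ℕ, 1 ≤ n →
      |x n - (4 * Real.sqrt (α * n) + c)| ≤ C * (n : ℝ) ^ (-ε))
    (hωasym : ∀ n : ℕ, 1 ≤ n →
      |ω n * (2 * Real.sqrt (α * n)) - 1| ≤ C * (n : ℝ) ^ (-ε))
    (hsum : Summable fun k => ω k * Real.exp (-x k)) :
    Summable (fun n : ℕ => (1 - Real.exp (x n - x (n + 1))) ^ 3) ∧
    Summable (fun n : ℕ => (1 - Real.exp (x n - x (n + 1))) *
      (Real.exp (x (n + 1)) *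
          (∑' k : ℕ, if n + 1 ≤ k then ω k * Real.exp (-x k) else 0) -
        1 / (4 * α)) ^ 2) := by
  exact stmt19_general hα hε (isBigO_of_forall_abs_le_mul hxasym)
    (isBigO_of_forall_abs_le_mul hωasym)
end
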